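/- Assume f satisfies (f1), (f2) with constant B ∈ [1,∞), and assumption (1.1a) with respect to the model pair (g, v, G). Then there exist r₀ ∈ (0,1), C > 0, and a twice continuously differentiable function u : (0,r₀) → ℝ such that u''(t) + u'(t)/t + f(u(t)) = 0 for all t ∈ (0,r₀), u(t) → ∞ as t → 0⁺, and |u(t) − ũ(t)| ≤ C · f(ũ(t)) · F(ũ(t)) · sup_{0 < s ≤ t} ( R₁(s) + R₂(s) ) for all t ∈ (0,r₀). -/

import Mathlib

/-! Write `η = -log F(u)` and `ρ = -2 log t`. The radial equation for `u` becomes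
`H'' = P(H) (H')² - exp (H - ρ) / 4` for `H(ρ) = η`, where `P = 1 - f' F` as a function of `η`.
The hypotheses say that `P` and its derivative are close to those of the model along the profile
`ρ - log (ρ + 1) - log (B / 4)`, to which `ũ` corresponds. Around this profile the equation is an
oscillator with frequency `1 / σ`, where `σ² = B (ρ + 1)`; after removing the displacement forced by
the error in `P`, it reads `z' = (κ / σ² - i / σ) z + (small)`. The rate `κ / σ²` is positive, so
variation of constants from infinity selects the decaying solution and is a contraction on a tube
whose radius is comparable to the supremum of `R₁ + R₂`: a nonlinearity quadratic in `z` costs a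
factor `σ`, which is what `(-log t)^(1/2) (R₁ + R₂) → 0` pays for. The bound on the displacement of
`η` turns into one on `u` because `f F` is the derivative of `u` in `η` and varies by at most a
constant factor over the tube. -/

open MeasureTheory Filter

/-- `Fint f s = ∫_s^∞ dτ / f(τ)`. -/
noncomputable def Fint (f : ℝ → ℝ) (s : ℝ) : ℝ := ∫ τ in Set.Ioi s, 1 / f τ

/-- `1/B₁[f](s) = (−log F(s))·(1 − f'(s)·F(s))`, with `G` playing the role of `F`. -/
noncomputable def invB1 (f G : ℝ → ℝ) (s : ℝ) : ℝ :=
  (-Real.log (G s)) * (1 - deriv f s * G s)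

/-- `1/B₂[f](s) = f'(s)·F(s)·(log F(s))²·(f(s)·f''(s)·F(s)/f'(s) − 1)`,
with `G` playing the role of `F`. -/
noncomputable def invB2 (f G : ℝ → ℝ) (s : ℝ) : ℝ :=
  deriv f s * G s * (Real.log (G s)) ^ 2 *
    (f s * deriv (deriv f) s * G s / deriv f s - 1)

/-- The model singular solution `v`. -/
noncomputable def modelv (B t : ℝ) : ℝ :=
  if B = 1 then Real.log (-2 * Real.log t) else (-2 * Real.log t) ^ ((B - 1) / B)

/-- The model nonlinearity `g`. -/
noncomputable def modelg (B s : ℝ) : ℝ :=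
  if B = 1 then 4 * Real.exp (Real.exp s - 2 * s)
  else (4 / (B * (B / (B - 1)))) * s ^ (1 - 2 * (B / (B - 1))) * Real.exp (s ^ (B / (B - 1)))

/-- The model function `G(s) = ∫_s^∞ dτ/g(τ)` in closed form. -/
noncomputable def modelG (B s : ℝ) : ℝ :=
  if B = 1 then (1 / 4) * (Real.exp s + 1) * Real.exp (-Real.exp s)
  else (B / 4) * (s ^ (B / (B - 1)) + 1) * Real.exp (-(s ^ (B / (B - 1))))

/-- The Emden–Fowler model profile `ψ`. -/
noncomputable def modelpsi (B ρ : ℝ) : ℝ :=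
  if B = 1 then Real.log (ρ - 1) else (ρ - 1) ^ ((B - 1) / B)

/-- `R₁(t) = |1/B₁[f](ũ(t)) − 1/B₁[g](v(t))|`. -/
noncomputable def R1 (f ut : ℝ → ℝ) (B t : ℝ) : ℝ :=
  |invB1 f (Fint f) (ut t) - invB1 (modelg B) (modelG B) (modelv B t)|

/-- `R₂(t) = |1/B₂[f](ũ(t)) − 1/B₂[g](v(t))|`. -/
noncomputable def R2 (f ut : ℝ → ℝ) (B t : ℝ) : ℝ :=
  |invB2 f (Fint f) (ut t) - invB2 (modelg B) (modelG B) (modelv B t)|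

section VariationOfConstants

variable {E : Type*} [NormedAddCommGroup E] {w k M : ℝ → ℝ} {a D x : ℝ} {H H₁ H₂ : ℝ → E}
  {G : ℝ → E → E}

/-- The nonlinearity `G` is a contraction relative to the rate `k` on the tube
`{(x, z) | a < x, ‖z‖ ≤ M x}`, and small enough at `z = 0` for the tube to be preserved. -/
structure IsTubeContraction (k M : ℝ → ℝ) (a : ℝ) (G : ℝ → E → E) : Prop where
  rate_pos : ∀ x, a < x → 0 < k x
  antitoneOn : AntitoneOn M (Set.Ici a)
  continuousOn : ContinuousOn (Function.uncurry G) {p | a < p.1 ∧ ‖p.2‖ ≤ M p.1}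
  norm_zero_le : ∀ x, a < x → ‖G x 0‖ ≤ k x / 2 * M x
  norm_sub_le : ∀ x, a < x → ∀ z z', ‖z‖ ≤ M x → ‖z'‖ ≤ M x →
    ‖G x z - G x z'‖ ≤ k x / 2 * ‖z - z'‖

namespace IsTubeContraction

variable {Z W : ℝ → E}

theorem radius_nonneg (hG : IsTubeContraction k M a G) (hx : a < x) : 0 ≤ M x :=
  nonneg_of_mul_nonneg_right ((norm_nonneg _).trans (hG.norm_zero_le x hx))
    (half_pos (hG.rate_pos x hx))

theorem norm_le (hG : IsTubeContraction k M a G) (hx : a < x) {z : E} (hz : ‖z‖ ≤ M x) :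
    ‖G x z‖ ≤ k x * M x := by
  have hsub := hG.norm_sub_le x hx z 0 hz (norm_zero.trans_le (hG.radius_nonneg hx))
  rw [sub_zero] at hsub
  have hk := hG.rate_pos x hx
  calc ‖G x z‖ ≤ ‖G x 0‖ + ‖G x z - G x 0‖ := norm_le_norm_add_norm_sub' _ _
    _ ≤ k x / 2 * M x + k x / 2 * M x := by
        refine add_le_add (hG.norm_zero_le x hx) (hsub.trans ?_)
        gcongr
    _ = k x * M x := by ring

theorem norm_comp_le (hG : IsTubeContraction k M a G) (hZ : ∀ y, a < y → ‖Z y‖ ≤ M y)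
    (hx : a ≤ x) {y : ℝ} (hxy : x < y) : ‖G y (Z y)‖ ≤ k y * M x := by
  have hy := hx.trans_lt hxy
  exact (hG.norm_le hy (hZ y hy)).trans
    (mul_le_mul_of_nonneg_left (hG.antitoneOn hx hy.le hxy.le) (hG.rate_pos y hy).le)

theorem continuousOn_comp (hG : IsTubeContraction k M a G) (hZc : ContinuousOn Z (Set.Ioi a))
    (hZ : ∀ y, a < y → ‖Z y‖ ≤ M y) : ContinuousOn (fun y ↦ G y (Z y)) (Set.Ioi a) :=
  hG.continuousOn.comp (continuousOn_id.prodMk hZc) fun y hy ↦ ⟨hy, hZ y hy⟩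

end IsTubeContraction

variable [NormedSpace ℝ E]

theorem hasDerivAt_integral_Ioi [CompleteSpace E] (hH : ContinuousOn H (Set.Ioi a))
    (hint : ∀ s, a < s → IntegrableOn H (Set.Ioi s)) (hx : a < x) :
    HasDerivAt (fun s ↦ ∫ y in Set.Ioi s, H y) (-H x) x := by
  obtain ⟨b, hab, hbx⟩ := exists_between hx
  have hprim : HasDerivAt (fun s ↦ ∫ y in b..s, H y) (H x) x := by
    refine intervalIntegral.integral_hasDerivAt_right ?_
      (hH.stronglyMeasurableAtFilter isOpen_Ioi x hx) (hH.continuousAt (Ioi_mem_nhds hx))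
    rw [intervalIntegrable_iff_integrableOn_Ioc_of_le hbx.le]
    exact (hint b hab).mono_set Set.Ioc_subset_Ioi_self
  refine (hprim.const_sub (∫ y in Set.Ioi b, H y)).congr_of_eventuallyEq ?_
  filter_upwards [Ioi_mem_nhds hbx] with s hs
  rw [← intervalIntegral.integral_Ioi_sub_Ioi (hint b hab) (le_of_lt hs), sub_sub_cancel]

/-- A positive solution `w` of `w' = k w` on `(a, ∞)` with rate `k > 0` and `w → ∞`: the growing
solution of the homogeneous equation, against which decaying solutions of the inhomogeneous
equation are built by integrating from infinity. -/
structure IsGrowthFactor (w k : ℝ → ℝ) (a : ℝ) : Prop where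
  pos : ∀ x, a < x → 0 < w x
  rate_pos : ∀ x, a < x → 0 < k x
  hasDerivAt : ∀ x, a < x → HasDerivAt w (k x * w x) x
  tendsto_atTop : Tendsto w atTop atTop

/-- The solution `-w(x) ∫_x^∞ w⁻¹ H` of `z' = k z + H`, given by variation of constants from
infinity; it is the bounded one when `H = O(k)`. -/
noncomputable def boundedSolution (w : ℝ → ℝ) (H : ℝ → E) (x : ℝ) : E :=
  -(w x • ∫ y in Set.Ioi x, (w y)⁻¹ • H y)

namespace IsGrowthFactor

theorem hasDerivAt_neg_inv (hw : IsGrowthFactor w k a) (hx : a < x) :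
    HasDerivAt (fun y ↦ -(w y)⁻¹) (k x * (w x)⁻¹) x := by
  have hne := (hw.pos x hx).ne'
  refine ((hw.hasDerivAt x hx).inv hne).neg.congr_deriv ?_
  field_simp

theorem integrableOn_rate_mul_inv (hw : IsGrowthFactor w k a) (hx : a < x) :
    IntegrableOn (fun y ↦ k y * (w y)⁻¹) (Set.Ioi x) :=
  integrableOn_Ioi_deriv_of_nonneg'
    (fun _ hy ↦ hw.hasDerivAt_neg_inv (hx.trans_le hy))
    (fun y hy ↦ (mul_pos (hw.rate_pos y (hx.trans hy)) (inv_pos.2 (hw.pos y (hx.trans hy)))).le)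
    hw.tendsto_atTop.inv_tendsto_atTop.neg

theorem integral_rate_mul_inv (hw : IsGrowthFactor w k a) (hx : a < x) :
    ∫ y in Set.Ioi x, k y * (w y)⁻¹ = (w x)⁻¹ := by
  rw [integral_Ioi_of_hasDerivAt_of_tendsto'
    (fun _ hy ↦ hw.hasDerivAt_neg_inv (hx.trans_le hy)) (hw.integrableOn_rate_mul_inv hx)
    hw.tendsto_atTop.inv_tendsto_atTop.neg]
  simp

theorem norm_inv_smul_le (hw : IsGrowthFactor w k a) (hx : a < x) (hH : ‖H x‖ ≤ k x * D) :
    ‖(w x)⁻¹ • H x‖ ≤ k x * (w x)⁻¹ * D := by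
  have hpos := inv_pos.2 (hw.pos x hx)
  rw [norm_smul, Real.norm_of_nonneg hpos.le]
  calc (w x)⁻¹ * ‖H x‖ ≤ (w x)⁻¹ * (k x * D) := by gcongr
    _ = k x * (w x)⁻¹ * D := by ring

theorem continuousOn_inv_smul (hw : IsGrowthFactor w k a) (hH : ContinuousOn H (Set.Ioi a)) :
    ContinuousOn (fun y ↦ (w y)⁻¹ • H y) (Set.Ioi a) :=
  ContinuousOn.smul (fun y hy ↦
    ((hw.hasDerivAt y hy).continuousAt.inv₀ (hw.pos y hy).ne').continuousWithinAt) hH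

theorem integrableOn_inv_smul (hw : IsGrowthFactor w k a) (hH : ContinuousOn H (Set.Ioi a))
    (hx : a < x) (hbound : ∀ y, x < y → ‖H y‖ ≤ k y * D) :
    IntegrableOn (fun y ↦ (w y)⁻¹ • H y) (Set.Ioi x) := by
  refine ((hw.integrableOn_rate_mul_inv hx).mul_const D).mono' ?_ ?_
  · exact ((hw.continuousOn_inv_smul hH).mono
      (Set.Ioi_subset_Ioi hx.le)).aestronglyMeasurable measurableSet_Ioi
  · filter_upwards [ae_restrict_mem measurableSet_Ioi] with y hy
    exact hw.norm_inv_smul_le (hx.trans hy) (hbound y hy)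

theorem norm_boundedSolution_le (hw : IsGrowthFactor w k a) (hx : a < x)
    (hbound : ∀ y, x < y → ‖H y‖ ≤ k y * D) : ‖boundedSolution w H x‖ ≤ D := by
  have hint : ‖∫ y in Set.Ioi x, (w y)⁻¹ • H y‖ ≤ ∫ y in Set.Ioi x, k y * (w y)⁻¹ * D := by
    refine norm_integral_le_of_norm_le ((hw.integrableOn_rate_mul_inv hx).mul_const D) ?_
    filter_upwards [ae_restrict_mem measurableSet_Ioi] with y hy
    exact hw.norm_inv_smul_le (hx.trans hy) (hbound y hy)
  rw [integral_mul_const, hw.integral_rate_mul_inv hx] at hint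
  have hpos := hw.pos x hx
  rw [boundedSolution, norm_neg, norm_smul, Real.norm_of_nonneg hpos.le]
  calc w x * ‖∫ y in Set.Ioi x, (w y)⁻¹ • H y‖ ≤ w x * ((w x)⁻¹ * D) := by gcongr
    _ = D := mul_inv_cancel_left₀ hpos.ne' D

theorem hasDerivAt_boundedSolution [CompleteSpace E] (hw : IsGrowthFactor w k a)
    (hH : ContinuousOn H (Set.Ioi a)) (hbound : ∀ y, a < y → ‖H y‖ ≤ k y * D) (hx : a < x) :
    HasDerivAt (boundedSolution w H) (k x • boundedSolution w H x + H x) x := by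
  have hint := hasDerivAt_integral_Ioi (hw.continuousOn_inv_smul hH)
    (fun s hs ↦ hw.integrableOn_inv_smul hH hs fun y hy ↦ hbound y (hs.trans hy)) hx
  refine ((hw.hasDerivAt x hx).smul hint).neg.congr_deriv ?_
  rw [boundedSolution, smul_neg, smul_neg, smul_inv_smul₀ (hw.pos x hx).ne', smul_smul]
  abel

theorem boundedSolution_sub (hw : IsGrowthFactor w k a)
    (hH₁ : ContinuousOn H₁ (Set.Ioi a)) (hH₂ : ContinuousOn H₂ (Set.Ioi a))
    (hbound₁ : ∀ y, a < y → ‖H₁ y‖ ≤ k y * D) (hbound₂ : ∀ y, a < y → ‖H₂ y‖ ≤ k y * D)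
    (hx : a < x) :
    boundedSolution w H₁ x - boundedSolution w H₂ x
      = boundedSolution w (fun y ↦ H₁ y - H₂ y) x := by
  simp only [boundedSolution, smul_sub]
  rw [integral_sub (hw.integrableOn_inv_smul hH₁ hx fun y hy ↦ hbound₁ y (hx.trans hy))
    (hw.integrableOn_inv_smul hH₂ hx fun y hy ↦ hbound₂ y (hx.trans hy)), smul_sub]
  abel

end IsGrowthFactor

namespace IsTubeContraction

variable {Z W : ℝ → E}

theorem norm_boundedSolution_comp_le (hG : IsTubeContraction k M a G) (hw : IsGrowthFactor w k a)
    (hZ : ∀ y, a < y → ‖Z y‖ ≤ M y) (hx : a < x) :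
    ‖boundedSolution w (fun y ↦ G y (Z y)) x‖ ≤ M x :=
  hw.norm_boundedSolution_le hx fun _ hy ↦ hG.norm_comp_le hZ hx.le hy

theorem hasDerivAt_boundedSolution_comp [CompleteSpace E] (hG : IsTubeContraction k M a G)
    (hw : IsGrowthFactor w k a) (hZc : ContinuousOn Z (Set.Ioi a))
    (hZ : ∀ y, a < y → ‖Z y‖ ≤ M y) (hx : a < x) :
    HasDerivAt (boundedSolution w fun y ↦ G y (Z y))
      (k x • boundedSolution w (fun y ↦ G y (Z y)) x + G x (Z x)) x :=
  hw.hasDerivAt_boundedSolution (hG.continuousOn_comp hZc hZ)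
    (fun _ hy ↦ hG.norm_comp_le hZ le_rfl hy) hx

theorem norm_boundedSolution_comp_sub_le (hG : IsTubeContraction k M a G)
    (hw : IsGrowthFactor w k a) (hZc : ContinuousOn Z (Set.Ioi a))
    (hWc : ContinuousOn W (Set.Ioi a)) (hZ : ∀ y, a < y → ‖Z y‖ ≤ M y)
    (hW : ∀ y, a < y → ‖W y‖ ≤ M y) (hD : ∀ y, ‖Z y - W y‖ ≤ D) (hx : a < x) :
    ‖boundedSolution w (fun y ↦ G y (Z y)) x - boundedSolution w (fun y ↦ G y (W y)) x‖
      ≤ 1 / 2 * D := by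
  rw [hw.boundedSolution_sub (hG.continuousOn_comp hZc hZ) (hG.continuousOn_comp hWc hW)
    (fun _ hy ↦ hG.norm_comp_le hZ le_rfl hy) (fun _ hy ↦ hG.norm_comp_le hW le_rfl hy) hx]
  refine hw.norm_boundedSolution_le hx fun y hy ↦ ?_
  have hya := hx.trans hy
  have hk := hG.rate_pos y hya
  calc ‖G y (Z y) - G y (W y)‖ ≤ k y / 2 * ‖Z y - W y‖ :=
        hG.norm_sub_le y hya _ _ (hZ y hya) (hW y hya)
    _ ≤ k y / 2 * D := by
        gcongr
        exact hD y
    _ = k y * (1 / 2 * D) := by ring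

open BoundedContinuousFunction in
theorem exists_eq_boundedSolution [CompleteSpace E] (hG : IsTubeContraction k M a G)
    (hw : IsGrowthFactor w k a) {b : ℝ} (hb : a < b) :
    ∃ Z : ℝ → E, ContinuousOn Z (Set.Ioi a) ∧ (∀ y, a < y → ‖Z y‖ ≤ M y) ∧
      ∀ y, b ≤ y → Z y = boundedSolution w (fun y ↦ G y (Z y)) y := by
  have hbmax (y : ℝ) : a < max y b := hb.trans_le (le_max_right _ _)
  let A : Set (ℝ →ᵇ E) := {Z | ∀ y, ‖Z y‖ ≤ M (max y b)}
  have hA : IsClosed A := by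
    simp only [A, Set.ofPred_forall]
    exact isClosed_iInter fun y ↦
      isClosed_le (lipschitz_eval_const y).continuous.norm continuous_const
  have hcont (Z : A) : ContinuousOn Z.1 (Set.Ioi a) := Z.1.continuous.continuousOn
  have htube (Z : A) (y : ℝ) (hy : a < y) : ‖Z.1 y‖ ≤ M y :=
    (Z.2 y).trans (hG.antitoneOn hy.le (hbmax y).le (le_max_left _ _))
  have hTcont (Z : A) : Continuous fun y ↦ boundedSolution w (fun y ↦ G y (Z.1 y)) (max y b) :=
    continuous_iff_continuousAt.2 fun y ↦
      (hG.hasDerivAt_boundedSolution_comp hw (hcont Z) (htube Z) (hbmax y)).continuousAt.comp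
        (f := fun y ↦ max y b) (by fun_prop)
  have hTmem (Z : A) (y : ℝ) :
      ‖boundedSolution w (fun y ↦ G y (Z.1 y)) (max y b)‖ ≤ M (max y b) :=
    hG.norm_boundedSolution_comp_le hw (htube Z) (hbmax y)
  let T (Z : A) : A := ⟨ofNormedAddCommGroup _ (hTcont Z) (M b) fun y ↦
    (hTmem Z y).trans (hG.antitoneOn hb.le (hbmax y).le (le_max_right _ _)), hTmem Z⟩
  have hT : ContractingWith (1 / 2) T := by
    refine ⟨by norm_num, LipschitzWith.of_dist_le_mul fun Z W ↦
      (dist_le (by positivity)).2 fun y ↦ ?_⟩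
    change dist (boundedSolution w _ _) (boundedSolution w _ _) ≤ _
    rw [dist_eq_norm]
    exact hG.norm_boundedSolution_comp_sub_le hw (hcont Z) (hcont W) (htube Z) (htube W)
      (fun y ↦ (dist_eq_norm (Z.1 y) (W.1 y)).symm.trans_le (dist_coe_le_dist y)) (hbmax y)
  have : CompleteSpace A := hA.completeSpace_coe
  have : Nonempty A := ⟨⟨0, fun y ↦ norm_zero.trans_le (hG.radius_nonneg (hbmax y))⟩⟩
  let Z := hT.fixedPoint
  refine ⟨Z.1, hcont Z, htube Z, fun y hy ↦ ?_⟩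
  have hfix : boundedSolution w (fun y ↦ G y (Z.1 y)) (max y b) = Z.1 y :=
    congr_arg (fun W : A ↦ W.1 y) hT.fixedPoint_isFixedPt
  rw [← hfix, max_eq_left hy]

theorem exists_hasDerivAt [CompleteSpace E] (hG : IsTubeContraction k M a G)
    (hw : IsGrowthFactor w k a) :
    ∃ Z : ℝ → E, ∀ᶠ x in atTop, HasDerivAt Z (k x • Z x + G x (Z x)) x ∧ ‖Z x‖ ≤ M x := by
  obtain ⟨Z, hcont, hbound, hfix⟩ := hG.exists_eq_boundedSolution hw (lt_add_one a)
  refine ⟨Z, (eventually_gt_atTop (a + 1)).mono fun x hx ↦ ?_⟩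
  have hxa := (lt_add_one a).trans hx
  have hderiv := hG.hasDerivAt_boundedSolution_comp hw hcont hbound hxa
  rw [← hfix x hx.le] at hderiv
  refine ⟨hderiv.congr_of_eventuallyEq ?_, hbound x hxa⟩
  filter_upwards [Ioi_mem_nhds hx] with y hy using hfix y (le_of_lt hy)

end IsTubeContraction

section Rotation

variable {φ φ' : ℝ → ℝ} {G : ℝ → ℂ → ℂ}

theorem IsTubeContraction.rotate (hG : IsTubeContraction k M a G)
    (hφ : ContinuousOn φ (Set.Ioi a)) :
    IsTubeContraction k M a fun x z ↦
      Complex.exp (φ x * Complex.I) * G x (Complex.exp (-φ x * Complex.I) * z) := by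
  have hrot (r : ℝ) (z : ℂ) : ‖Complex.exp (r * Complex.I) * z‖ = ‖z‖ := by
    rw [norm_mul, Complex.norm_exp_ofReal_mul_I, one_mul]
  have hrot' (r : ℝ) (z : ℂ) : ‖Complex.exp (-r * Complex.I) * z‖ = ‖z‖ := mod_cast hrot (-r) z
  refine ⟨hG.rate_pos, hG.antitoneOn, ?_, fun x hx ↦ ?_, fun x hx z z' hz hz' ↦ ?_⟩
  · have hφ₁ : ContinuousOn (fun p : ℝ × ℂ ↦ (φ p.1 : ℂ)) {p | a < p.1 ∧ ‖p.2‖ ≤ M p.1} :=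
      Complex.continuous_ofReal.comp_continuousOn
        (hφ.comp continuous_fst.continuousOn fun p hp ↦ hp.1)
    refine ContinuousOn.mul (by fun_prop) (hG.continuousOn.comp
      (f := fun p : ℝ × ℂ ↦ (p.1, Complex.exp (-φ p.1 * Complex.I) * p.2)) (by fun_prop) ?_)
    exact fun p hp ↦ ⟨hp.1, (hrot' _ _).trans_le hp.2⟩
  · rw [hrot, mul_zero]
    exact hG.norm_zero_le x hx
  · rw [← mul_sub, hrot, ← hrot' (φ x) (z - z'), mul_sub]
    exact hG.norm_sub_le x hx _ _ ((hrot' _ _).trans_le hz) ((hrot' _ _).trans_le hz')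

theorem IsTubeContraction.exists_hasDerivAt_of_phase (hG : IsTubeContraction k M a G)
    (hw : IsGrowthFactor w k a) (hφ : ∀ x, a < x → HasDerivAt φ (φ' x) x) :
    ∃ Z : ℝ → ℂ, ∀ᶠ x in atTop,
      HasDerivAt Z ((k x - φ' x * Complex.I) * Z x + G x (Z x)) x ∧ ‖Z x‖ ≤ M x := by
  obtain ⟨W, hW⟩ := (hG.rotate fun x hx ↦ (hφ x hx).continuousAt.continuousWithinAt)
    |>.exists_hasDerivAt hw
  refine ⟨fun x ↦ Complex.exp (-φ x * Complex.I) * W x, ?_⟩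
  filter_upwards [hW, eventually_gt_atTop a] with x hWx hx
  have hφx : HasDerivAt (fun x ↦ Complex.exp (-φ x * Complex.I))
      (Complex.exp (-φ x * Complex.I) * (-φ' x * Complex.I)) x :=
    ((hφ x hx).ofReal_comp.neg.mul_const Complex.I).cexp
  have hcancel : Complex.exp (-φ x * Complex.I) * Complex.exp (φ x * Complex.I) = 1 := by
    rw [← Complex.exp_add, ← add_mul, neg_add_cancel, zero_mul, Complex.exp_zero]
  refine ⟨(hφx.mul hWx.1).congr_deriv ?_, ?_⟩
  · rw [Complex.real_smul]
    linear_combination G x (Complex.exp (-φ x * Complex.I) * W x) * hcancel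
  · rw [norm_mul, ← Complex.ofReal_neg, Complex.norm_exp_ofReal_mul_I, one_mul]
    exact hWx.2

end Rotation

end VariationOfConstants

section Remainder

theorem abs_exp_sub_sub_exp_sub_le {d x y : ℝ} (hd : d ≤ 1) (hx : |x| ≤ d) (hy : |y| ≤ d) :
    |(Real.exp x - 1 - x) - (Real.exp y - 1 - y)| ≤ 2 * d * |x - y| := by
  refine (convex_Icc (-d) d).norm_image_sub_le_of_norm_hasDerivWithin_le
    (f := fun s ↦ Real.exp s - 1 - s) (f' := fun s ↦ Real.exp s - 1) (fun s _ ↦ ?_)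
    (fun s hs ↦ ?_) (abs_le.1 hy) (abs_le.1 hx)
  · exact (((Real.hasDerivAt_exp s).sub_const 1).sub (hasDerivAt_id s)).hasDerivWithinAt
  · have hs : |s| ≤ d := abs_le.2 hs
    calc ‖Real.exp s - 1‖ ≤ 2 * |s| := Real.abs_exp_sub_one_le (hs.trans hd)
      _ ≤ 2 * d := by gcongr

/-- The nonlinear part of the second-order equation around the model, in the first-order variables
`θ` (displacement) and `ζ` (normalised velocity, so that `θ' = ζ / σ + κ θ / σ ^ 2`). Here `m` is
the slope of the model, and `Q`, `Q₀` are the damping coefficients of the perturbed and of the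
unperturbed solution. -/
noncomputable def oscillatorRemainder (κ σ m Q Q₀ θ ζ : ℝ) : ℝ :=
  σ * (Q * (m + (ζ / σ + κ * θ / σ ^ 2)) ^ 2 - Q₀ * m ^ 2) - 2 * ζ / σ ^ 2
    + κ * (3 * κ - 4) * θ / σ ^ 3 - (Real.exp θ - 1 - θ) / σ

variable {κ σ δ m μ μ₁ μ₂ A Q Q₁ Q₂ L θ θ₁ θ₂ ζ ζ₁ ζ₂ : ℝ}

theorem abs_velocity_le (hκ : 1 ≤ κ) (hσ : 1 ≤ σ) (hθ : |θ| ≤ δ / σ) (hζ : |ζ| ≤ δ / σ) :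
    |ζ / σ + κ * θ / σ ^ 2| ≤ 2 * κ * δ := by
  have hδ : 0 ≤ δ / σ := (abs_nonneg θ).trans hθ
  have hδσ : δ / σ ≤ δ := div_le_self (nonneg_of_mul_nonneg_left hδ (by positivity)) hσ
  calc |ζ / σ + κ * θ / σ ^ 2| ≤ |ζ| / σ + κ * |θ| / σ ^ 2 := by
        refine (abs_add_le _ _).trans_eq ?_
        rw [abs_div, abs_div, abs_mul, abs_of_pos (by linarith : 0 < σ),
          abs_of_pos (by linarith : 0 < κ), abs_of_pos (by positivity : 0 < σ ^ 2)]
    _ ≤ |ζ| + κ * |θ| :=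
        add_le_add (div_le_self (abs_nonneg _) hσ)
          (div_le_self (by positivity) (one_le_pow₀ hσ))
    _ ≤ κ * δ + κ * δ := by
        gcongr
        · nlinarith
        · linarith
    _ = 2 * κ * δ := by ring

theorem abs_mul_add_sub_two_le (hκ : 1 ≤ κ) (hδ : δ ≤ 1) (hA : |A - 1| ≤ δ) (hm : |m - 1| ≤ δ)
    (hμ₁ : |μ₁| ≤ 2 * κ * δ) (hμ₂ : |μ₂| ≤ 2 * κ * δ) :
    |A * (2 * m + μ₁ + μ₂) - 2| ≤ 14 * κ * δ := by
  have hδ₀ : 0 ≤ δ := (abs_nonneg _).trans hA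
  have hs : |2 * m + μ₁ + μ₂ - 2| ≤ 6 * κ * δ := by
    calc |2 * m + μ₁ + μ₂ - 2| = |2 * (m - 1) + μ₁ + μ₂| := by ring_nf
      _ ≤ 2 * |m - 1| + |μ₁| + |μ₂| := by
          simpa [abs_mul] using abs_add_three (2 * (m - 1)) μ₁ μ₂
      _ ≤ 6 * κ * δ := by nlinarith
  calc |A * (2 * m + μ₁ + μ₂) - 2|
      = |(A - 1) * (2 * m + μ₁ + μ₂ - 2) + 2 * (A - 1) + (2 * m + μ₁ + μ₂ - 2)| := by ring_nf
    _ ≤ |A - 1| * |2 * m + μ₁ + μ₂ - 2| + 2 * |A - 1| + |2 * m + μ₁ + μ₂ - 2| := by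
        simpa [abs_mul] using abs_add_three ((A - 1) * (2 * m + μ₁ + μ₂ - 2)) (2 * (A - 1))
          (2 * m + μ₁ + μ₂ - 2)
    _ ≤ 1 * (6 * κ * δ) + 2 * δ + 6 * κ * δ := by
        gcongr
        exact hA.trans hδ
    _ ≤ 14 * κ * δ := by nlinarith

theorem oscillatorRemainder_sub (hσ : σ ≠ 0) :
    oscillatorRemainder κ σ m Q₁ Q θ₁ ζ₁ - oscillatorRemainder κ σ m Q₂ Q θ₂ ζ₂
      = σ * (Q₁ - Q₂) * (m + (ζ₁ / σ + κ * θ₁ / σ ^ 2)) ^ 2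
        + (σ ^ 2 * Q₂ * (2 * m + (ζ₁ / σ + κ * θ₁ / σ ^ 2) + (ζ₂ / σ + κ * θ₂ / σ ^ 2)) - 2)
          * ((ζ₁ - ζ₂) / σ ^ 2 + κ * (θ₁ - θ₂) / σ ^ 3)
        + κ * (3 * κ - 2) * (θ₁ - θ₂) / σ ^ 3
        - ((Real.exp θ₁ - 1 - θ₁) - (Real.exp θ₂ - 1 - θ₂)) / σ := by
  simp only [oscillatorRemainder]
  field_simp
  ring

theorem abs_mul_velocity_sub_le {X : ℝ} (hκ : 1 ≤ κ) (hσ : 0 < σ) (hδ : δ ≤ 1)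
    (hX : |X| ≤ 14 * κ * δ) :
    |X * ((ζ₁ - ζ₂) / σ ^ 2 + κ * (θ₁ - θ₂) / σ ^ 3)|
      ≤ 14 * κ * δ / σ ^ 2 * |ζ₁ - ζ₂| + 14 * κ ^ 2 / σ ^ 3 * |θ₁ - θ₂| := by
  have hdiff : |(ζ₁ - ζ₂) / σ ^ 2 + κ * (θ₁ - θ₂) / σ ^ 3|
      ≤ |ζ₁ - ζ₂| / σ ^ 2 + κ * |θ₁ - θ₂| / σ ^ 3 := by
    refine (abs_add_le _ _).trans_eq ?_
    simp only [abs_div, abs_mul, abs_pow, abs_of_pos hσ, abs_of_pos (one_pos.trans_le hκ)]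
  rw [abs_mul]
  calc |X| * |(ζ₁ - ζ₂) / σ ^ 2 + κ * (θ₁ - θ₂) / σ ^ 3|
      ≤ 14 * κ * δ * (|ζ₁ - ζ₂| / σ ^ 2 + κ * |θ₁ - θ₂| / σ ^ 3) :=
        mul_le_mul hX hdiff (abs_nonneg _) ((abs_nonneg _).trans hX)
    _ = 14 * κ * δ / σ ^ 2 * |ζ₁ - ζ₂| + 14 * (κ ^ 2 * δ) / σ ^ 3 * |θ₁ - θ₂| := by ring
    _ ≤ 14 * κ * δ / σ ^ 2 * |ζ₁ - ζ₂| + 14 * κ ^ 2 / σ ^ 3 * |θ₁ - θ₂| := by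
        gcongr
        exact mul_le_of_le_one_right (by positivity) hδ

theorem abs_oscillatorRemainder_sub_le (hκ : 1 ≤ κ) (hσ : 1 ≤ σ) (hδ : δ ≤ 1) (hL : 0 ≤ L)
    (hm : |m - 1| ≤ δ) (hQ₂ : |σ ^ 2 * Q₂ - 1| ≤ δ) (hQ : |Q₁ - Q₂| ≤ L / σ ^ 4 * |θ₁ - θ₂|)
    (hθ₁ : |θ₁| ≤ δ / σ) (hζ₁ : |ζ₁| ≤ δ / σ) (hθ₂ : |θ₂| ≤ δ / σ) (hζ₂ : |ζ₂| ≤ δ / σ) :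
    |oscillatorRemainder κ σ m Q₁ Q θ₁ ζ₁ - oscillatorRemainder κ σ m Q₂ Q θ₂ ζ₂|
      ≤ (14 * κ * δ + (16 * L + 17) * κ ^ 2 / σ) / σ ^ 2 * (|θ₁ - θ₂| + |ζ₁ - ζ₂|) := by
  have hσ₀ : 0 < σ := one_pos.trans_le hσ
  have hδ₀ : 0 ≤ δ := (abs_nonneg _).trans hm
  have hμ₁ := abs_velocity_le hκ hσ hθ₁ hζ₁
  have hμ₂ := abs_velocity_le hκ hσ hθ₂ hζ₂
  rw [oscillatorRemainder_sub hσ₀.ne']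
  set μ₁ := ζ₁ / σ + κ * θ₁ / σ ^ 2
  set μ₂ := ζ₂ / σ + κ * θ₂ / σ ^ 2
  have hspeed : |m + μ₁| ≤ 4 * κ := by
    have := abs_add_three 1 (m - 1) μ₁
    rw [abs_one, add_sub_cancel] at this
    nlinarith
  have hdamping : |σ * (Q₁ - Q₂) * (m + μ₁) ^ 2| ≤ 16 * L * κ ^ 2 / σ ^ 3 * |θ₁ - θ₂| := by
    rw [abs_mul, abs_mul, abs_pow, abs_of_pos hσ₀]
    calc σ * |Q₁ - Q₂| * |m + μ₁| ^ 2 ≤ σ * (L / σ ^ 4 * |θ₁ - θ₂|) * (4 * κ) ^ 2 := by gcongr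
      _ = 16 * L * κ ^ 2 / σ ^ 3 * |θ₁ - θ₂| := by field_simp; ring
  have hvelocity := abs_mul_velocity_sub_le (θ₁ := θ₁) (θ₂ := θ₂) (ζ₁ := ζ₁) (ζ₂ := ζ₂) hκ hσ₀ hδ
    (abs_mul_add_sub_two_le hκ hδ hQ₂ hm hμ₁ hμ₂)
  have hdrift : |κ * (3 * κ - 2) * (θ₁ - θ₂) / σ ^ 3| ≤ 3 * κ ^ 2 / σ ^ 3 * |θ₁ - θ₂| := by
    rw [abs_div, abs_mul, abs_of_nonneg (by nlinarith : 0 ≤ κ * (3 * κ - 2)),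
      abs_of_pos (by positivity : 0 < σ ^ 3), mul_div_right_comm]
    have : κ * (3 * κ - 2) ≤ 3 * κ ^ 2 := by nlinarith
    gcongr
  have hexp : |((Real.exp θ₁ - 1 - θ₁) - (Real.exp θ₂ - 1 - θ₂)) / σ|
      ≤ 2 * δ / σ ^ 2 * |θ₁ - θ₂| := by
    rw [abs_div, abs_of_pos hσ₀, div_le_iff₀ hσ₀]
    refine (abs_exp_sub_sub_exp_sub_le ((div_le_self hδ₀ hσ).trans hδ) hθ₁ hθ₂).trans_eq ?_
    field_simp
  have hδκ : 2 * δ / σ ^ 2 * |θ₁ - θ₂| ≤ 14 * κ * δ / σ ^ 2 * |θ₁ - θ₂| := by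
    gcongr
    linarith
  have hζ : 0 ≤ (16 * L + 17) * κ ^ 2 / σ / σ ^ 2 * |ζ₁ - ζ₂| := by positivity
  refine (abs_sub _ _).trans ((add_le_add_left (abs_add_three _ _ _) _).trans ?_)
  refine (add_le_add (add_le_add_three hdamping hvelocity hdrift) (hexp.trans hδκ)).trans ?_
  rw [← sub_nonneg]
  refine hζ.trans_eq ?_
  field_simp
  ring

theorem continuousAt_oscillatorRemainder {X : Type*} [TopologicalSpace X] {x : X}
    {σ m Q Q₀ θ ζ : X → ℝ} (hσ₀ : σ x ≠ 0) (hσ : ContinuousAt σ x) (hm : ContinuousAt m x)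
    (hQ : ContinuousAt Q x) (hQ₀ : ContinuousAt Q₀ x) (hθ : ContinuousAt θ x)
    (hζ : ContinuousAt ζ x) :
    ContinuousAt (fun y ↦ oscillatorRemainder κ (σ y) (m y) (Q y) (Q₀ y) (θ y) (ζ y)) x := by
  unfold oscillatorRemainder
  fun_prop (disch := positivity)

end Remainder

section ModelProfile

/-- The model `-log G(v(t))` in the logarithmic variable `ρ = -2 log t`. -/
noncomputable def modelProfile (B ρ : ℝ) : ℝ := ρ - Real.log (ρ + 1) - Real.log (B / 4)

/-- The damping coefficient `1 - g'(v(t)) G(v(t))` of the model, where `ρ = -2 log t`. -/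
noncomputable def modelDamping (B ρ : ℝ) : ℝ := (ρ + 1 + B) / (B * ρ ^ 2)

/-- The length scale `√(B (ρ + 1))` of the oscillation of solutions around the model. -/
noncomputable def oscillationScale (B ρ : ℝ) : ℝ := √(B * (ρ + 1))

/-- The growth rate `κ / σ ^ 2` of the oscillation around the model, with `κ = B / 4 + 1` and
`σ` the oscillation scale. -/
noncomputable def oscillationRate (B ρ : ℝ) : ℝ := (B / 4 + 1) / (B * (ρ + 1))

variable {B ρ : ℝ}

theorem hasDerivAt_modelProfile (hρ : 0 < ρ) :
    HasDerivAt (modelProfile B) (ρ / (ρ + 1)) ρ := by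
  have hlog := ((hasDerivAt_id ρ).add_const 1).log (by simp only [id]; positivity)
  refine (((hasDerivAt_id ρ).sub hlog).sub_const (Real.log (B / 4))).congr_deriv ?_
  simp only [id]
  field_simp
  ring

theorem hasDerivAt_modelDamping (hB : B ≠ 0) (hρ : 0 < ρ) :
    HasDerivAt (modelDamping B) (-(ρ + 2 + 2 * B) / (B * ρ ^ 3)) ρ := by
  have hnum := ((hasDerivAt_id ρ).add_const 1).add_const B
  have hden := ((hasDerivAt_id ρ).pow 2).const_mul B
  refine (hnum.div hden (by simp only [id, Pi.pow_apply]; positivity)).congr_deriv ?_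
  simp only [id, Pi.pow_apply]
  field_simp
  ring

theorem hasDerivAt_slope (hρ : 0 < ρ) :
    HasDerivAt (fun ρ ↦ ρ / (ρ + 1)) (1 / (ρ + 1) ^ 2) ρ := by
  refine ((hasDerivAt_id ρ).div ((hasDerivAt_id ρ).add_const 1)
    (by simp only [id]; positivity)).congr_deriv ?_
  simp only [id]
  ring

theorem eventually_half_le_modelProfile (B : ℝ) : ∀ᶠ ρ in atTop, ρ / 2 ≤ modelProfile B ρ := by
  have hlog : Real.log =o[atTop] (id : ℝ → ℝ) := Real.isLittleO_log_id_atTop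
  filter_upwards [(tendsto_atTop_add_const_right _ 1 tendsto_id).eventually
    (hlog.bound (by norm_num : (0 : ℝ) < 1 / 4)), eventually_gt_atTop 0,
    eventually_ge_atTop (1 + 4 * Real.log (B / 4))] with ρ hlog hpos hlarge
  have habs : Real.log (ρ + 1) ≤ 1 / 4 * (ρ + 1) := by
    simpa [abs_of_pos (by linarith : 0 < ρ + 1)] using (le_abs_self _).trans hlog
  rw [modelProfile]
  linarith

theorem tendsto_modelProfile (B : ℝ) : Tendsto (modelProfile B) atTop atTop :=
  tendsto_atTop_mono' _ (eventually_half_le_modelProfile B)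
    (tendsto_id.atTop_div_const (by norm_num))

theorem exp_modelProfile_sub (hB : 0 < B) (hρ : 0 < ρ) :
    Real.exp (modelProfile B ρ - ρ) = 4 / (B * (ρ + 1)) := by
  have : modelProfile B ρ - ρ = Real.log (4 / (B * (ρ + 1))) := by
    rw [modelProfile, Real.log_div hB.ne' four_ne_zero, Real.log_div four_ne_zero (by positivity),
      Real.log_mul hB.ne' (by positivity)]
    ring
  rw [this, Real.exp_log (by positivity)]

theorem oscillationScale_sq (hB : 0 < B) (hρ : 0 < ρ) :
    oscillationScale B ρ ^ 2 = B * (ρ + 1) :=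
  Real.sq_sqrt (by positivity)

theorem oscillationScale_pos (hB : 0 < B) (hρ : 0 < ρ) : 0 < oscillationScale B ρ :=
  Real.sqrt_pos.2 (by positivity)

theorem oscillationRate_eq (hB : 0 < B) (hρ : 0 < ρ) :
    oscillationRate B ρ = (B / 4 + 1) / oscillationScale B ρ ^ 2 := by
  rw [oscillationRate, oscillationScale_sq hB hρ]

theorem hasDerivAt_oscillationScale (hB : 0 < B) (hρ : 0 < ρ) :
    HasDerivAt (oscillationScale B) (B / (2 * oscillationScale B ρ)) ρ := by
  have hlin := ((hasDerivAt_id ρ).add_const 1).const_mul B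
  exact (hlin.sqrt (by simp only [id]; positivity)).congr_deriv (by
    rw [mul_one, oscillationScale]; rfl)

theorem hasDerivAt_oscillationPhase (hB : 0 < B) (hρ : 0 < ρ) :
    HasDerivAt (fun ρ ↦ 2 / B * oscillationScale B ρ) (1 / oscillationScale B ρ) ρ := by
  refine ((hasDerivAt_oscillationScale hB hρ).const_mul (2 / B)).congr_deriv ?_
  have := oscillationScale_pos hB hρ
  field_simp

theorem tendsto_oscillationScale (hB : 0 < B) : Tendsto (oscillationScale B) atTop atTop :=
  Real.tendsto_sqrt_atTop.comp
    ((tendsto_atTop_add_const_right _ 1 tendsto_id).const_mul_atTop hB)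

theorem tendsto_sq_scale_mul_modelDamping (hB : 0 < B) :
    Tendsto (fun ρ ↦ oscillationScale B ρ ^ 2 * modelDamping B ρ) atTop (nhds 1) := by
  have hinv := tendsto_inv_atTop_zero (𝕜 := ℝ)
  have hlim := (hinv.const_add 1).mul ((hinv.mul_const (1 + B)).const_add 1)
  simp only [add_zero, zero_mul, mul_one] at hlim
  refine hlim.congr' ?_
  filter_upwards [eventually_gt_atTop 0] with ρ hρ
  rw [oscillationScale_sq hB hρ, modelDamping]
  field_simp
  ring

theorem isGrowthFactor_rpow {a b c : ℝ} (hc : 0 < c) (hab : 0 ≤ a + b) :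
    IsGrowthFactor (fun x ↦ (x + b) ^ c) (fun x ↦ c / (x + b)) a := by
  have hpos (x : ℝ) (hx : a < x) : 0 < x + b := by linarith
  refine ⟨fun x hx ↦ Real.rpow_pos_of_pos (hpos x hx) c, fun x hx ↦ div_pos hc (hpos x hx),
    fun x hx ↦ ?_, (tendsto_rpow_atTop hc).comp (tendsto_atTop_add_const_right _ b tendsto_id)⟩
  have := hpos x hx
  refine (((hasDerivAt_id x).add_const b).rpow_const (Or.inl this.ne')).congr_deriv ?_
  simp only [id, Real.rpow_sub_one this.ne']
  ring

end ModelProfile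

section Perturbation

/-- The damping coefficient `P`, with derivative `P'`, is within `M(ρ) / ρ` of the model damping
along the model profile, and likewise for the derivatives within `M(ρ) / ρ ^ 2`. The error `M` is
allowed to decay just faster than the inverse length scale `ρ ^ (-1/2)` of the oscillation. -/
structure IsAsymptoticToModel (B : ℝ) (P P' M : ℝ → ℝ) : Prop where
  hasDerivAt : ∀ᶠ η in atTop, HasDerivAt P (P' η) η
  continuousAt : ∀ᶠ η in atTop, ContinuousAt P' η
  abs_deriv_le : ∃ C, ∀ᶠ η in atTop, |P' η| ≤ C / η ^ 2
  abs_sub_le : ∀ᶠ ρ in atTop, |P (modelProfile B ρ) - modelDamping B ρ| ≤ M ρ / ρ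
  abs_deriv_sub_le : ∀ᶠ ρ in atTop,
    |P' (modelProfile B ρ) * (ρ / (ρ + 1)) + (ρ + 2 + 2 * B) / (B * ρ ^ 3)| ≤ M ρ / ρ ^ 2
  antitoneOn : ∃ a, AntitoneOn M (Set.Ici a)
  tendsto : Tendsto (fun ρ ↦ √ρ * M ρ) atTop (nhds 0)

/-- The displacement `h` that balances the forcing by the damping error `P - modelDamping`. -/
noncomputable def forcedDisplacement (B : ℝ) (P : ℝ → ℝ) (ρ : ℝ) : ℝ :=
  B * ρ ^ 2 / (ρ + 1) * (P (modelProfile B ρ) - modelDamping B ρ)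

/-- The derivative of `forcedDisplacement B P`, where `P'` is the derivative of `P`. -/
noncomputable def forcedVelocity (B : ℝ) (P P' : ℝ → ℝ) (ρ : ℝ) : ℝ :=
  B * (ρ ^ 2 + 2 * ρ) / (ρ + 1) ^ 2 * (P (modelProfile B ρ) - modelDamping B ρ) +
    B * ρ ^ 2 / (ρ + 1) *
      (P' (modelProfile B ρ) * (ρ / (ρ + 1)) + (ρ + 2 + 2 * B) / (B * ρ ^ 3))

/-- The nonlinear remainder of the equation `H'' = P(H) H' ^ 2 - exp (H - ρ) / 4` around the
model profile. -/
noncomputable def profileRemainder (B : ℝ) (P : ℝ → ℝ) (ρ θ ζ : ℝ) : ℝ :=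
  oscillatorRemainder (B / 4 + 1) (oscillationScale B ρ) (ρ / (ρ + 1))
    (P (modelProfile B ρ + θ)) (P (modelProfile B ρ)) θ ζ

/-- The forcing in the equation for `z = θ - h + i ζ`, where `θ` is the displacement from the model
profile, `h` the forced displacement and `ζ` the normalised velocity. -/
noncomputable def profileForcing (B : ℝ) (P P' : ℝ → ℝ) (ρ : ℝ) (z : ℂ) : ℂ :=
  ((oscillationRate B ρ * forcedDisplacement B P ρ - forcedVelocity B P P' ρ : ℝ) : ℂ)
    + (profileRemainder B P ρ (forcedDisplacement B P ρ + z.re) z.im : ℝ) * Complex.I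

variable {B K ρ : ℝ} {P P' M : ℝ → ℝ}

theorem hasDerivAt_forcedDisplacement (hB : B ≠ 0) (hρ : 0 < ρ)
    (hP : HasDerivAt P (P' (modelProfile B ρ)) (modelProfile B ρ)) :
    HasDerivAt (forcedDisplacement B P) (forcedVelocity B P P' ρ) ρ := by
  have hcoeff := (((hasDerivAt_id ρ).pow 2).const_mul B).div ((hasDerivAt_id ρ).add_const 1)
    (by simp only [id]; positivity)
  have hdamping := (hP.comp ρ (hasDerivAt_modelProfile hρ)).sub (hasDerivAt_modelDamping hB hρ)
  refine (hcoeff.mul hdamping).congr_deriv ?_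
  simp only [forcedVelocity, id, Pi.pow_apply, Pi.div_apply, Pi.sub_apply, Function.comp_apply]
  field_simp
  ring

theorem abs_forcedDisplacement_le (hB : 0 < B) (hρ : 0 < ρ)
    (hP : |P (modelProfile B ρ) - modelDamping B ρ| ≤ M ρ / ρ) :
    |forcedDisplacement B P ρ| ≤ B * M ρ := by
  have hM : 0 ≤ M ρ := nonneg_of_mul_nonneg_left ((abs_nonneg _).trans hP) (inv_pos.2 hρ)
  rw [forcedDisplacement, abs_mul, abs_of_nonneg (by positivity)]
  calc B * ρ ^ 2 / (ρ + 1) * |P (modelProfile B ρ) - modelDamping B ρ|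
      ≤ B * ρ ^ 2 / (ρ + 1) * (M ρ / ρ) := by gcongr
    _ = B * M ρ * (ρ / (ρ + 1)) := by field_simp
    _ ≤ B * M ρ :=
        mul_le_of_le_one_right (by positivity) ((div_le_one (by linarith)).2 (by linarith))

theorem abs_forcedVelocity_le (hB : 0 < B) (hρ : 0 < ρ)
    (hP : |P (modelProfile B ρ) - modelDamping B ρ| ≤ M ρ / ρ)
    (hP' : |P' (modelProfile B ρ) * (ρ / (ρ + 1)) + (ρ + 2 + 2 * B) / (B * ρ ^ 3)| ≤ M ρ / ρ ^ 2) :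
    |forcedVelocity B P P' ρ| ≤ 12 * B * oscillationRate B ρ * M ρ := by
  have hM : 0 ≤ M ρ := nonneg_of_mul_nonneg_left ((abs_nonneg _).trans hP) (inv_pos.2 hρ)
  calc |forcedVelocity B P P' ρ|
      ≤ B * (ρ ^ 2 + 2 * ρ) / (ρ + 1) ^ 2 * (M ρ / ρ) + B * ρ ^ 2 / (ρ + 1) * (M ρ / ρ ^ 2) := by
        refine (abs_add_le _ _).trans ?_
        rw [abs_mul, abs_mul, abs_of_nonneg (by positivity : 0 ≤ B * (ρ ^ 2 + 2 * ρ) / (ρ + 1) ^ 2),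
          abs_of_nonneg (by positivity : 0 ≤ B * ρ ^ 2 / (ρ + 1))]
        gcongr
    _ = B * M ρ / (ρ + 1) * ((ρ + 2) / (ρ + 1) + 1) := by field_simp
    _ ≤ B * M ρ / (ρ + 1) * (2 + 1) := by
        gcongr
        rw [div_le_iff₀ (by linarith)]
        linarith
    _ ≤ 12 * B * oscillationRate B ρ * M ρ := by
        rw [oscillationRate, ← sub_nonneg]
        have : 0 ≤ 12 * M ρ / (ρ + 1) := by positivity
        refine this.trans_eq ?_
        field_simp
        ring

theorem continuousAt_forcedVelocity (hB : 0 < B) (hρ : 0 < ρ)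
    (hP : ContinuousAt P (modelProfile B ρ)) (hP' : ContinuousAt P' (modelProfile B ρ)) :
    ContinuousAt (forcedVelocity B P P') ρ := by
  have hprofile := (hasDerivAt_modelProfile (B := B) hρ).continuousAt
  have hmodel := (hasDerivAt_modelDamping hB.ne' hρ).continuousAt
  have : B * ρ ^ 3 ≠ 0 := by positivity
  have hdiff : ContinuousAt (fun ρ ↦ P (modelProfile B ρ) - modelDamping B ρ) ρ :=
    (hP.comp hprofile).sub hmodel
  have hdiff' : ContinuousAt (fun ρ ↦
      P' (modelProfile B ρ) * (ρ / (ρ + 1)) + (ρ + 2 + 2 * B) / (B * ρ ^ 3)) ρ :=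
    ((hP'.comp hprofile).mul (by fun_prop (disch := positivity))).add
      (by fun_prop (disch := positivity))
  exact (ContinuousAt.mul (by fun_prop (disch := positivity)) hdiff).add
    (ContinuousAt.mul (by fun_prop (disch := positivity)) hdiff')

theorem continuousAt_profileForcing {z : ℂ} (hB : 0 < B) (hρ : 0 < ρ)
    (hP : HasDerivAt P (P' (modelProfile B ρ)) (modelProfile B ρ))
    (hP' : ContinuousAt P' (modelProfile B ρ))
    (hPz : ContinuousAt P (modelProfile B ρ + (forcedDisplacement B P ρ + z.re))) :
    ContinuousAt (Function.uncurry (profileForcing B P P')) (ρ, z) := by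
  have hfst {g : ℝ → ℝ} (hg : ContinuousAt g ρ) : ContinuousAt (fun p : ℝ × ℂ ↦ g p.1) (ρ, z) :=
    ContinuousAt.comp (f := Prod.fst) hg continuousAt_fst
  have hprofile := (hasDerivAt_modelProfile (B := B) hρ).continuousAt
  have hh := (hasDerivAt_forcedDisplacement hB.ne' hρ hP).continuousAt
  have hrate : ContinuousAt (oscillationRate B) ρ :=
    continuousAt_const.div (by fun_prop) (by positivity)
  have hre : ContinuousAt (fun p : ℝ × ℂ ↦ forcedDisplacement B P p.1 + p.2.re) (ρ, z) :=
    (hfst hh).add (Complex.continuous_re.comp continuous_snd).continuousAt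
  have hremainder := continuousAt_oscillatorRemainder (κ := B / 4 + 1) (x := (ρ, z))
    (oscillationScale_pos hB hρ).ne' (hfst (hasDerivAt_oscillationScale hB hρ).continuousAt)
    (hfst (hasDerivAt_slope hρ).continuousAt)
    (ContinuousAt.comp_of_eq (g := P) hPz ((hfst hprofile).add hre) rfl)
    (hfst (hP.continuousAt.comp hprofile)) hre
    (Complex.continuous_im.comp continuous_snd).continuousAt
  have hlinear := hfst ((hrate.mul hh).sub
    (continuousAt_forcedVelocity hB hρ hP.continuousAt hP'))
  exact (Complex.continuous_ofReal.continuousAt.comp hlinear).add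
    ((Complex.continuous_ofReal.continuousAt.comp hremainder).mul continuousAt_const)

namespace IsAsymptoticToModel

theorem tendsto_scale_mul (hP : IsAsymptoticToModel B P P' M) (hB : 0 < B) :
    Tendsto (fun ρ ↦ oscillationScale B ρ * M ρ) atTop (nhds 0) := by
  have hlim := hP.tendsto.norm.const_mul √(2 * B)
  rw [norm_zero, mul_zero] at hlim
  refine squeeze_zero_norm' ?_ hlim
  filter_upwards [eventually_ge_atTop 1] with ρ hρ
  rw [norm_mul, norm_mul, Real.norm_of_nonneg (Real.sqrt_nonneg ρ), oscillationScale,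
    Real.norm_of_nonneg (Real.sqrt_nonneg _), ← mul_assoc, ← Real.sqrt_mul (by positivity)]
  exact mul_le_mul_of_nonneg_right (Real.sqrt_le_sqrt (by nlinarith)) (norm_nonneg _)

theorem tendsto_error (hP : IsAsymptoticToModel B P P' M) : Tendsto M atTop (nhds 0) := by
  refine squeeze_zero_norm' ?_ (by simpa only [norm_zero] using hP.tendsto.norm)
  filter_upwards [eventually_ge_atTop 1] with ρ hρ
  rw [norm_mul, Real.norm_of_nonneg (Real.sqrt_nonneg ρ)]
  exact le_mul_of_one_le_left (norm_nonneg _) (Real.one_le_sqrt.2 hρ)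

theorem eventually_forall_modelProfile_add {p : ℝ → Prop} (hp : ∀ᶠ η in atTop, p η) :
    ∀ᶠ ρ in atTop, ∀ θ, |θ| ≤ 1 → p (modelProfile B ρ + θ) := by
  obtain ⟨N, hN⟩ := eventually_atTop.1 hp
  filter_upwards [(tendsto_modelProfile B).eventually_ge_atTop (N + 1)] with ρ hρ θ hθ
  exact hN _ (by linarith [(abs_le.1 hθ).1])

theorem exists_eventually_abs_damping_sub_le (hP : IsAsymptoticToModel B P P' M) (hB : 0 < B) :
    ∃ L ≥ 0, ∀ᶠ ρ in atTop, ∀ θ₁ θ₂, |θ₁| ≤ 1 → |θ₂| ≤ 1 →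
      |P (modelProfile B ρ + θ₁) - P (modelProfile B ρ + θ₂)|
        ≤ L / oscillationScale B ρ ^ 4 * |θ₁ - θ₂| := by
  obtain ⟨C, hC⟩ := hP.abs_deriv_le
  refine ⟨64 * |C| * B ^ 2, by positivity, ?_⟩
  filter_upwards [eventually_forall_modelProfile_add (B := B) hP.hasDerivAt,
    eventually_forall_modelProfile_add (B := B) hC, eventually_half_le_modelProfile B,
    eventually_ge_atTop 4] with ρ hderiv hbound hhalf hρ θ₁ θ₂ hθ₁ hθ₂
  have hlip : ∀ θ ∈ Set.Icc (-1 : ℝ) 1, ‖P' (modelProfile B ρ + θ)‖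
      ≤ 64 * |C| * B ^ 2 / oscillationScale B ρ ^ 4 := fun θ hθ ↦ by
    have hfar : ρ / 4 ≤ modelProfile B ρ + θ := by linarith [hθ.1]
    calc ‖P' (modelProfile B ρ + θ)‖ ≤ C / (modelProfile B ρ + θ) ^ 2 := hbound θ (abs_le.2 hθ)
      _ ≤ |C| / (ρ / 4) ^ 2 := by gcongr; exact le_abs_self C
      _ = 64 * |C| * B ^ 2 / (2 * B * ρ) ^ 2 := by field_simp; ring
      _ ≤ 64 * |C| * B ^ 2 / (B * (ρ + 1)) ^ 2 := by
          gcongr 64 * |C| * B ^ 2 / ?_ ^ 2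
          nlinarith
      _ = 64 * |C| * B ^ 2 / oscillationScale B ρ ^ 4 := by
          rw [← oscillationScale_sq hB (by linarith)]; ring
  exact (convex_Icc (-1 : ℝ) 1).norm_image_sub_le_of_norm_hasDerivWithin_le
    (fun θ hθ ↦ ((hderiv θ (abs_le.2 hθ)).comp_const_add _ _).hasDerivWithinAt) hlip
    (abs_le.1 hθ₂) (abs_le.1 hθ₁)

theorem tendsto_sq_scale_mul_damping (hP : IsAsymptoticToModel B P P' M) (hB : 0 < B) :
    Tendsto (fun ρ ↦ oscillationScale B ρ ^ 2 * P (modelProfile B ρ)) atTop (nhds 1) := by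
  have herr : Tendsto (fun ρ ↦ oscillationScale B ρ ^ 2 *
      (P (modelProfile B ρ) - modelDamping B ρ)) atTop (nhds 0) := by
    refine squeeze_zero_norm' ?_ (by simpa using hP.tendsto_error.const_mul (2 * B))
    filter_upwards [hP.abs_sub_le, eventually_ge_atTop 1] with ρ hdiff hρ
    rw [oscillationScale_sq hB (by linarith), norm_mul, Real.norm_of_nonneg (by positivity)]
    calc B * (ρ + 1) * ‖P (modelProfile B ρ) - modelDamping B ρ‖
        ≤ B * (2 * ρ) * (M ρ / ρ) := by
          gcongr
          · linarith
          · exact hdiff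
      _ = 2 * B * M ρ := by field_simp
  simpa [mul_sub] using (tendsto_sq_scale_mul_modelDamping hB).add herr

theorem eventually_abs_sq_scale_mul_damping_sub_one_le (hP : IsAsymptoticToModel B P P' M)
    (hB : 0 < B) {δ : ℝ} (hδ : 0 < δ) :
    ∀ᶠ ρ in atTop, ∀ θ, |θ| ≤ 1 →
      |oscillationScale B ρ ^ 2 * P (modelProfile B ρ + θ) - 1| ≤ δ := by
  obtain ⟨L, hL, hlip⟩ := hP.exists_eventually_abs_damping_sub_le hB
  have hscale : Tendsto (fun ρ ↦ L / oscillationScale B ρ ^ 2) atTop (nhds 0) :=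
    ((tendsto_pow_atTop two_ne_zero).comp (tendsto_oscillationScale hB)).const_div_atTop L
  filter_upwards [hlip, hscale.eventually (ge_mem_nhds (half_pos hδ)), eventually_gt_atTop 0,
    (hP.tendsto_sq_scale_mul_damping hB).eventually (Metric.closedBall_mem_nhds _ (half_pos hδ))]
    with ρ hlip hscale hρ hcentre θ hθ
  have hσ := oscillationScale_pos hB hρ
  have hshift : |oscillationScale B ρ ^ 2 * (P (modelProfile B ρ + θ) - P (modelProfile B ρ))|
      ≤ δ / 2 := by
    have hlip₀ := hlip θ 0 hθ (by simp)
    rw [add_zero, sub_zero] at hlip₀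
    rw [abs_mul, abs_of_pos (by positivity)]
    calc oscillationScale B ρ ^ 2 * |P (modelProfile B ρ + θ) - P (modelProfile B ρ)|
        ≤ oscillationScale B ρ ^ 2 * (L / oscillationScale B ρ ^ 4 * 1) := by
          gcongr
          exact hlip₀.trans (mul_le_mul_of_nonneg_left hθ (by positivity))
      _ = L / oscillationScale B ρ ^ 2 := by field_simp
      _ ≤ δ / 2 := hscale
  rw [Real.dist_eq] at hcentre
  calc _ = |oscillationScale B ρ ^ 2 * (P (modelProfile B ρ + θ) - P (modelProfile B ρ))
          + (oscillationScale B ρ ^ 2 * P (modelProfile B ρ) - 1)| := by ring_nf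
    _ ≤ δ / 2 + δ / 2 := (abs_add_le _ _).trans (add_le_add hshift hcentre)
    _ = δ := add_halves δ

theorem eventually_abs_profileRemainder_sub_le (hP : IsAsymptoticToModel B P P' M) (hB : 0 < B)
    (K : ℝ) :
    ∀ᶠ ρ in atTop, ∀ θ₁ ζ₁ θ₂ ζ₂, |θ₁| ≤ K * M ρ → |ζ₁| ≤ K * M ρ → |θ₂| ≤ K * M ρ →
      |ζ₂| ≤ K * M ρ → |profileRemainder B P ρ θ₁ ζ₁ - profileRemainder B P ρ θ₂ ζ₂|
        ≤ oscillationRate B ρ / 4 * (|θ₁ - θ₂| + |ζ₁ - ζ₂|) := by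
  obtain ⟨L, hL, hlip⟩ := hP.exists_eventually_abs_damping_sub_le hB
  have hinv : Tendsto (fun ρ ↦ (16 * L + 17) * (B / 4 + 1) ^ 2 / oscillationScale B ρ) atTop
      (nhds 0) := (tendsto_oscillationScale hB).const_div_atTop _
  have htube : Tendsto (fun ρ ↦ K * (oscillationScale B ρ * M ρ)) atTop (nhds 0) := by
    simpa using (hP.tendsto_scale_mul hB).const_mul K
  filter_upwards [hlip,
    hP.eventually_abs_sq_scale_mul_damping_sub_one_le hB (by norm_num : (0 : ℝ) < 1 / 112),
    hinv.eventually (ge_mem_nhds (by norm_num : (0 : ℝ) < 1 / 8)),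
    htube.eventually (ge_mem_nhds (by norm_num : (0 : ℝ) < 1 / 112)),
    (tendsto_oscillationScale hB).eventually_ge_atTop 1, eventually_ge_atTop 111]
    with ρ hlip hdamping hinv htube hσ hρ θ₁ ζ₁ θ₂ ζ₂ hθ₁ hζ₁ hθ₂ hζ₂
  have hσ₀ : 0 < oscillationScale B ρ := by linarith
  have hradius : K * M ρ ≤ 1 / 112 / oscillationScale B ρ := by
    rw [le_div_iff₀ hσ₀]
    linarith
  have hone : K * M ρ ≤ 1 := hradius.trans ((div_le_self (by norm_num) hσ).trans (by norm_num))
  have hslope : |ρ / (ρ + 1) - 1| ≤ 1 / 112 := by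
    rw [div_sub_one (by linarith), sub_add_cancel_left, abs_div, abs_neg, abs_one,
      abs_of_pos (by linarith)]
    exact one_div_le_one_div_of_le (by norm_num) (by linarith)
  refine (abs_oscillatorRemainder_sub_le (by linarith) hσ (by norm_num) hL hslope
    (hdamping θ₂ (hθ₂.trans hone))
    ((hlip θ₁ θ₂ (hθ₁.trans hone) (hθ₂.trans hone)).trans_eq ?_) (hθ₁.trans hradius)
    (hζ₁.trans hradius) (hθ₂.trans hradius) (hζ₂.trans hradius)).trans ?_
  · rfl
  · rw [oscillationRate_eq hB (by linarith), div_right_comm _ _ (4 : ℝ)]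
    gcongr
    linarith

theorem eventually_norm_profileForcing_sub_le (hP : IsAsymptoticToModel B P P' M) (hB : 0 < B)
    (K : ℝ) :
    ∀ᶠ ρ in atTop, ∀ z z' : ℂ, ‖z‖ ≤ K * M ρ → ‖z'‖ ≤ K * M ρ →
      ‖profileForcing B P P' ρ z - profileForcing B P P' ρ z'‖
        ≤ oscillationRate B ρ / 2 * ‖z - z'‖ := by
  filter_upwards [hP.eventually_abs_profileRemainder_sub_le hB (B + K), hP.abs_sub_le,
    eventually_gt_atTop 0] with ρ hlip hdamping hρ z z' hz hz'
  have hh := abs_forcedDisplacement_le hB hρ hdamping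
  have hM := (abs_nonneg _).trans hh
  have hrate : 0 < oscillationRate B ρ := by
    rw [oscillationRate]
    positivity
  have hre (z : ℂ) (hz : ‖z‖ ≤ K * M ρ) : |forcedDisplacement B P ρ + z.re| ≤ (B + K) * M ρ := by
    linarith [abs_add_le (forcedDisplacement B P ρ) z.re, z.abs_re_le_norm]
  have him (z : ℂ) (hz : ‖z‖ ≤ K * M ρ) : |z.im| ≤ (B + K) * M ρ := by
    linarith [z.abs_im_le_norm]
  have hdiff := hlip _ _ _ _ (hre z hz) (him z hz) (hre z' hz') (him z' hz')
  rw [add_sub_add_left_eq_sub, ← Complex.sub_re, ← Complex.sub_im] at hdiff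
  rw [profileForcing, profileForcing, add_sub_add_left_eq_sub, ← sub_mul, ← Complex.ofReal_sub,
    norm_mul, Complex.norm_I, mul_one, Complex.norm_real, Real.norm_eq_abs]
  calc _ ≤ oscillationRate B ρ / 4 * (|(z - z').re| + |(z - z').im|) := hdiff
    _ ≤ oscillationRate B ρ / 4 * (‖z - z'‖ + ‖z - z'‖) := by
        gcongr
        · exact Complex.abs_re_le_norm _
        · exact Complex.abs_im_le_norm _
    _ = oscillationRate B ρ / 2 * ‖z - z'‖ := by ring

theorem eventually_norm_profileForcing_zero_le (hP : IsAsymptoticToModel B P P' M) (hB : 0 < B) :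
    ∀ᶠ ρ in atTop, ‖profileForcing B P P' ρ 0‖ ≤ oscillationRate B ρ / 2 * (28 * B * M ρ) := by
  filter_upwards [hP.eventually_abs_profileRemainder_sub_le hB B, hP.abs_sub_le,
    hP.abs_deriv_sub_le, eventually_gt_atTop 0] with ρ hlip hdamping hdamping' hρ
  have hh := abs_forcedDisplacement_le hB hρ hdamping
  have hM := (abs_nonneg _).trans hh
  have hrate : 0 < oscillationRate B ρ := by
    rw [oscillationRate]
    positivity
  have hremainder : |profileRemainder B P ρ (forcedDisplacement B P ρ) 0|
      ≤ oscillationRate B ρ * (B * M ρ) := by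
    have hzero : profileRemainder B P ρ 0 0 = 0 := by
      simp [profileRemainder, oscillatorRemainder]
    have hdiff := hlip (forcedDisplacement B P ρ) 0 0 0 hh (by simpa) (by simpa) (by simpa)
    rw [hzero] at hdiff
    simp only [sub_zero, abs_zero, add_zero] at hdiff
    refine hdiff.trans ?_
    gcongr
    linarith
  have hlinear : |oscillationRate B ρ * forcedDisplacement B P ρ - forcedVelocity B P P' ρ|
      ≤ oscillationRate B ρ * (B * M ρ) + 12 * B * oscillationRate B ρ * M ρ := by
    refine (abs_sub _ _).trans (add_le_add ?_ (abs_forcedVelocity_le hB hρ hdamping hdamping'))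
    rw [abs_mul, abs_of_pos hrate]
    gcongr
  rw [profileForcing, Complex.zero_re, Complex.zero_im, add_zero]
  refine (norm_add_le _ _).trans ?_
  rw [norm_mul, Complex.norm_I, mul_one, Complex.norm_real, Complex.norm_real, Real.norm_eq_abs,
    Real.norm_eq_abs]
  linarith

theorem eventually_continuousAt_profileForcing (hP : IsAsymptoticToModel B P P' M) (hB : 0 < B)
    (K : ℝ) :
    ∀ᶠ ρ in atTop, ∀ z : ℂ, ‖z‖ ≤ K * M ρ →
      ContinuousAt (Function.uncurry (profileForcing B P P')) (ρ, z) := by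
  have htube : Tendsto (fun ρ ↦ (B + K) * M ρ) atTop (nhds 0) := by
    simpa using hP.tendsto_error.const_mul (B + K)
  filter_upwards [eventually_forall_modelProfile_add (B := B) hP.hasDerivAt, hP.abs_sub_le,
    (tendsto_modelProfile B).eventually hP.continuousAt, eventually_gt_atTop 0,
    htube.eventually (ge_mem_nhds one_pos)] with ρ hderiv hdamping hcont hρ htube z hz
  have hderiv₀ := hderiv 0 (by simp)
  rw [add_zero] at hderiv₀
  refine continuousAt_profileForcing hB hρ hderiv₀ hcont (hderiv _ ?_).continuousAt
  linarith [abs_add_le (forcedDisplacement B P ρ) z.re, z.abs_re_le_norm,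
    abs_forcedDisplacement_le hB hρ hdamping]

theorem exists_isTubeContraction (hP : IsAsymptoticToModel B P P' M) (hB : 0 < B) :
    ∃ a ≥ 0, IsTubeContraction (oscillationRate B) (fun ρ ↦ 28 * B * M ρ) a
      (profileForcing B P P') := by
  obtain ⟨b, hanti⟩ := hP.antitoneOn
  obtain ⟨a, ha⟩ := eventually_atTop.1
    ((hP.eventually_norm_profileForcing_sub_le hB (28 * B)).and
      ((hP.eventually_norm_profileForcing_zero_le hB).and
        ((hP.eventually_continuousAt_profileForcing hB (28 * B)).and
          ((eventually_ge_atTop 0).and (eventually_ge_atTop b)))))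
  obtain ⟨-, -, -, ha₀, hba⟩ := ha a le_rfl
  refine ⟨a, ha₀, fun ρ hρ ↦ ?_, fun x hx y hy hxy ↦ ?_, fun p hp ↦ ?_, fun ρ hρ ↦ ?_,
    fun ρ hρ ↦ ?_⟩
  · have : 0 < ρ := ha₀.trans_lt hρ
    rw [oscillationRate]
    positivity
  · have := hanti (hba.trans hx) (hba.trans hy) hxy
    gcongr
  · exact ((ha p.1 hp.1.le).2.2.1 p.2 hp.2).continuousWithinAt
  · exact (ha ρ hρ.le).2.1
  · exact (ha ρ hρ.le).1

end IsAsymptoticToModel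

end Perturbation

section PerturbedSolution

variable {B ρ : ℝ} {P P' M θ ζ : ℝ → ℝ}

theorem hasDerivAt_oscillationRate (hB : 0 < B) (hρ : 0 < ρ) :
    HasDerivAt (oscillationRate B) (-((B / 4 + 1) * B / oscillationScale B ρ ^ 4)) ρ := by
  refine ((hasDerivAt_const ρ (B / 4 + 1)).div (((hasDerivAt_id ρ).add_const 1).const_mul B)
    (by simp only [id]; positivity)).congr_deriv ?_
  simp only [id]
  rw [← oscillationScale_sq hB hρ]
  ring

/-- The slope of `modelProfile B + θ` when `θ' = θ oscillationRate + ζ / oscillationScale`. -/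
noncomputable def perturbedSlope (B : ℝ) (θ ζ : ℝ → ℝ) (ρ : ℝ) : ℝ :=
  ρ / (ρ + 1) + (ζ ρ / oscillationScale B ρ + oscillationRate B ρ * θ ρ)

theorem sq_slope_mul_damping (hB : 0 < B) (hρ : 0 < ρ) :
    P (modelProfile B ρ) * (ρ / (ρ + 1)) ^ 2
      = 1 / (ρ + 1) ^ 2 + 1 / oscillationScale B ρ ^ 2
        + forcedDisplacement B P ρ / oscillationScale B ρ ^ 2 := by
  rw [oscillationScale_sq hB hρ, forcedDisplacement, modelDamping]
  field_simp
  ring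

theorem hasDerivAt_perturbedSlope (hB : 0 < B) (hρ : 0 < ρ)
    (hθ : HasDerivAt θ (oscillationRate B ρ * θ ρ + ζ ρ / oscillationScale B ρ) ρ)
    (hζ : HasDerivAt ζ (oscillationRate B ρ * ζ ρ
      - (θ ρ - forcedDisplacement B P ρ) / oscillationScale B ρ
      + profileRemainder B P ρ (θ ρ) (ζ ρ)) ρ) :
    HasDerivAt (perturbedSlope B θ ζ) (P (modelProfile B ρ + θ ρ) * perturbedSlope B θ ζ ρ ^ 2
      - Real.exp (modelProfile B ρ + θ ρ - ρ) / 4) ρ := by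
  have hσ := oscillationScale_pos hB hρ
  have hexp : Real.exp (modelProfile B ρ + θ ρ - ρ)
      = 4 * Real.exp (θ ρ) / oscillationScale B ρ ^ 2 := by
    rw [add_sub_right_comm, Real.exp_add, exp_modelProfile_sub hB hρ, oscillationScale_sq hB hρ]
    ring
  have hmodel := sq_slope_mul_damping (P := P) hB hρ
  refine ((hasDerivAt_slope hρ).add ((hζ.div (hasDerivAt_oscillationScale hB hρ) hσ.ne').add
    ((hasDerivAt_oscillationRate hB hρ).mul hθ))).congr_deriv ?_
  rw [hexp, perturbedSlope, profileRemainder, oscillatorRemainder, hmodel,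
    oscillationRate_eq hB hρ]
  field_simp
  ring

theorem rotation_mul_add_eq (k φ α β : ℝ) (z : ℂ) :
    (k - φ * Complex.I) * z + (α + β * Complex.I)
      = ⟨k * z.re + φ * z.im + α, k * z.im - φ * z.re + β⟩ := by
  apply Complex.ext <;> simp
  ring

namespace IsAsymptoticToModel

theorem exists_displacement (hP : IsAsymptoticToModel B P P' M) (hB : 0 < B) :
    ∃ θ ζ : ℝ → ℝ, ∀ᶠ ρ in atTop,
      HasDerivAt θ (oscillationRate B ρ * θ ρ + ζ ρ / oscillationScale B ρ) ρ ∧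
      HasDerivAt ζ (oscillationRate B ρ * ζ ρ
        - (θ ρ - forcedDisplacement B P ρ) / oscillationScale B ρ
        + profileRemainder B P ρ (θ ρ) (ζ ρ)) ρ ∧
      |θ ρ| ≤ 29 * B * M ρ := by
  obtain ⟨a, ha, hG⟩ := hP.exists_isTubeContraction hB
  have hw : IsGrowthFactor (fun x ↦ (x + 1) ^ ((B / 4 + 1) / B)) (oscillationRate B) a := by
    have hrate : oscillationRate B = fun x ↦ (B / 4 + 1) / B / (x + 1) :=
      funext fun x ↦ (div_div _ _ _).symm
    rw [hrate]
    exact isGrowthFactor_rpow (by positivity) (by positivity)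
  obtain ⟨Z, hZ⟩ := hG.exists_hasDerivAt_of_phase hw fun x hx ↦
    hasDerivAt_oscillationPhase hB (ha.trans_lt hx)
  refine ⟨fun ρ ↦ forcedDisplacement B P ρ + (Z ρ).re, fun ρ ↦ (Z ρ).im, ?_⟩
  filter_upwards [hZ, (tendsto_modelProfile B).eventually hP.hasDerivAt, hP.abs_sub_le,
    eventually_gt_atTop 0] with ρ hZ hderiv hdamping hρ
  have hderivZ := hZ.1
  rw [profileForcing, rotation_mul_add_eq] at hderivZ
  refine ⟨((hasDerivAt_forcedDisplacement hB.ne' hρ hderiv).add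
    (Complex.reCLM.hasFDerivAt.comp_hasDerivAt ρ hderivZ)).congr_deriv ?_,
    (Complex.imCLM.hasFDerivAt.comp_hasDerivAt ρ hderivZ).congr_deriv ?_, ?_⟩
  · rw [Complex.reCLM_apply]
    ring
  · rw [Complex.imCLM_apply]
    ring
  · linarith [abs_add_le (forcedDisplacement B P ρ) (Z ρ).re, (Z ρ).abs_re_le_norm,
      abs_forcedDisplacement_le hB hρ hdamping, hZ.2]

theorem exists_solution (hP : IsAsymptoticToModel B P P' M) (hB : 0 < B) :
    ∃ H H' : ℝ → ℝ, ∀ᶠ ρ in atTop, HasDerivAt H (H' ρ) ρ ∧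
      HasDerivAt H' (P (H ρ) * H' ρ ^ 2 - Real.exp (H ρ - ρ) / 4) ρ ∧
      |H ρ - modelProfile B ρ| ≤ 29 * B * M ρ := by
  obtain ⟨θ, ζ, h⟩ := hP.exists_displacement hB
  refine ⟨fun ρ ↦ modelProfile B ρ + θ ρ, perturbedSlope B θ ζ, ?_⟩
  filter_upwards [h, eventually_gt_atTop 0] with ρ ⟨hθ, hζ, hbound⟩ hρ
  refine ⟨((hasDerivAt_modelProfile hρ).add hθ).congr_deriv ?_,
    hasDerivAt_perturbedSlope hB hρ hθ hζ, by rwa [add_sub_cancel_left]⟩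
  rw [perturbedSlope]
  ring

end IsAsymptoticToModel

end PerturbedSolution

section InverseFunction

variable {L L' : ℝ → ℝ} {s₀ : ℝ}

theorem strictMonoOn_of_hasDerivAt_pos (hL : ∀ s, s₀ < s → HasDerivAt L (L' s) s)
    (hpos : ∀ s, s₀ < s → 0 < L' s) : StrictMonoOn L (Set.Ioi s₀) := by
  refine strictMonoOn_of_deriv_pos (convex_Ioi s₀)
    (fun s hs ↦ (hL s hs).continuousAt.continuousWithinAt) fun s hs ↦ ?_
  rw [interior_Ioi] at hs
  rw [(hL s hs).deriv]
  exact hpos s hs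

theorem exists_gt_eq_of_tendsto_atTop (hL : ContinuousOn L (Set.Ioi s₀))
    (htop : Tendsto L atTop atTop) {a η : ℝ} (ha : s₀ < a) (hη : L a < η) :
    ∃ s, a < s ∧ L s = η := by
  obtain ⟨b, hb, hab⟩ := ((htop.eventually_gt_atTop η).and (eventually_gt_atTop a)).exists
  obtain ⟨s, hs, hsη⟩ := intermediate_value_Ioo hab.le
    (hL.mono fun x hx ↦ ha.trans_le hx.1) ⟨hη, hb⟩
  exact ⟨s, hs.1, hsη⟩

theorem exists_tendsto_hasDerivAt_rightInverse (hL : ∀ s, s₀ < s → HasDerivAt L (L' s) s)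
    (hpos : ∀ s, s₀ < s → 0 < L' s) (htop : Tendsto L atTop atTop) :
    ∃ S : ℝ → ℝ, Tendsto S atTop atTop ∧
      ∀ᶠ η in atTop, s₀ < S η ∧ L (S η) = η ∧ HasDerivAt S (L' (S η))⁻¹ η := by
  have hmono := strictMonoOn_of_hasDerivAt_pos hL hpos
  have hcontL : ContinuousOn L (Set.Ioi s₀) := fun s hs ↦
    (hL s hs).continuousAt.continuousWithinAt
  let S := Function.invFunOn L (Set.Ioi s₀)
  have hS {a : ℝ} (ha : s₀ < a) {η : ℝ} (hη : L a < η) : a < S η ∧ L (S η) = η := by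
    obtain ⟨s, hs, hsη⟩ := exists_gt_eq_of_tendsto_atTop hcontL htop ha hη
    have hex : ∃ s ∈ Set.Ioi s₀, L s = η := ⟨s, ha.trans hs, hsη⟩
    have heq : L (S η) = η := Function.invFunOn_eq hex
    refine ⟨(hmono.lt_iff_lt ha (Function.invFunOn_mem hex)).1 ?_, heq⟩
    rwa [heq]
  have hSL {s : ℝ} (hs : s₀ < s) : S (L s) = s :=
    hmono.injOn.leftInvOn_invFunOn hs
  refine ⟨S, tendsto_atTop.2 fun b ↦ ?_, ?_⟩
  · have hb : s₀ < max b (s₀ + 1) := (lt_add_one s₀).trans_le (le_max_right _ _)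
    filter_upwards [eventually_gt_atTop (L (max b (s₀ + 1)))] with η hη
    exact (le_max_left _ _).trans (hS hb hη).1.le
  · have ha : s₀ < s₀ + 1 := lt_add_one s₀
    filter_upwards [eventually_gt_atTop (L (s₀ + 1))] with η hη
    obtain ⟨hSη, hLS⟩ := hS ha hη
    have hSmono : StrictMonoOn S (Set.Ioi (L (s₀ + 1))) := fun x hx y hy hxy ↦
      (hmono.lt_iff_lt (ha.trans (hS ha hx).1) (ha.trans (hS ha hy).1)).1 (by
        rwa [(hS ha hx).2, (hS ha hy).2])
    have hcont : ContinuousAt S η := by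
      refine hSmono.continuousAt_of_image_mem_nhds (Ioi_mem_nhds hη) ?_
      filter_upwards [Ioi_mem_nhds hSη] with s hs
      exact ⟨L s, hmono ha (ha.trans hs) hs, hSL (ha.trans hs)⟩
    refine ⟨ha.trans hSη, hLS, .of_local_left_inverse hcont (hL _ (ha.trans hSη))
      (hpos _ (ha.trans hSη)).ne' ?_⟩
    filter_upwards [Ioi_mem_nhds hη] with x hx using (hS ha hx).2

end InverseFunction

section LogDerivative

variable {k p S : ℝ → ℝ} {a x y : ℝ}

theorem le_exp_mul_of_abs_logDeriv_le (hk : ∀ x, a < x → HasDerivAt k (p x * k x) x)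
    (hpos : ∀ x, a < x → 0 < k x) (hp : ∀ x, a < x → |p x| ≤ 1) (hx : a < x) (hy : a < y) :
    k y ≤ Real.exp |y - x| * k x := by
  have hlog : |Real.log (k y) - Real.log (k x)| ≤ 1 * |y - x| :=
    (convex_Ioi a).norm_image_sub_le_of_norm_hasDerivWithin_le (f := fun z ↦ Real.log (k z))
      (fun z hz ↦ (((hk z hz).log (hpos z hz).ne').congr_deriv
        (mul_div_cancel_right₀ _ (hpos z hz).ne')).hasDerivWithinAt) hp hx hy
  calc k y = Real.exp (Real.log (k y) - Real.log (k x)) * k x := by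
        rw [Real.exp_sub, Real.exp_log (hpos x hx), Real.exp_log (hpos y hy),
          div_mul_cancel₀ _ (hpos x hx).ne']
    _ ≤ Real.exp |y - x| * k x :=
        mul_le_mul_of_nonneg_right (Real.exp_le_exp.2
          ((le_abs_self _).trans (hlog.trans_eq (one_mul _)))) (hpos x hx).le

theorem abs_sub_le_of_abs_logDeriv_le (hS : ∀ x, a < x → HasDerivAt S (k x) x)
    (hk : ∀ x, a < x → HasDerivAt k (p x * k x) x) (hpos : ∀ x, a < x → 0 < k x)
    (hp : ∀ x, a < x → |p x| ≤ 1) (hx : a < x) (hy : a < y) (hxy : |y - x| ≤ 1) :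
    |S y - S x| ≤ Real.exp 1 * k x * |y - x| := by
  have hsub : Set.uIcc x y ⊆ Set.Ioi a := fun z hz ↦ (lt_min hx hy).trans_le hz.1
  refine (convex_uIcc x y).norm_image_sub_le_of_norm_hasDerivWithin_le
    (fun z hz ↦ (hS z (hsub hz)).hasDerivWithinAt) (fun z hz ↦ ?_)
    Set.left_mem_uIcc Set.right_mem_uIcc
  rw [Real.norm_of_nonneg (hpos z (hsub hz)).le]
  exact (le_exp_mul_of_abs_logDeriv_le hk hpos hp hx (hsub hz)).trans
    (mul_le_mul_of_nonneg_right (Real.exp_le_exp.2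
      ((Set.abs_sub_left_of_mem_uIcc hz).trans hxy)) (hpos x hx).le)

end LogDerivative

section TailIntegral

variable {f : ℝ → ℝ} {s₀ s : ℝ}

theorem hasDerivAt_Fint (hf : ContinuousOn f (Set.Ioi s₀)) (hpos : ∀ s, s₀ < s → 0 < f s)
    (hint : ∀ s, s₀ < s → IntegrableOn (fun τ ↦ 1 / f τ) (Set.Ioi s)) (hs : s₀ < s) :
    HasDerivAt (Fint f) (-(1 / f s)) s :=
  hasDerivAt_integral_Ioi (continuousOn_const.div hf fun x hx ↦ (hpos x hx).ne') hint hs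

theorem strictAntiOn_Fint (hf : ContinuousOn f (Set.Ioi s₀)) (hpos : ∀ s, s₀ < s → 0 < f s)
    (hint : ∀ s, s₀ < s → IntegrableOn (fun τ ↦ 1 / f τ) (Set.Ioi s)) :
    StrictAntiOn (Fint f) (Set.Ioi s₀) := by
  have hderiv {s : ℝ} (hs : s₀ < s) := hasDerivAt_Fint hf hpos hint hs
  refine strictAntiOn_of_deriv_neg (convex_Ioi s₀)
    (fun s hs ↦ (hderiv hs).continuousAt.continuousWithinAt) fun s hs ↦ ?_
  rw [interior_Ioi] at hs
  rw [(hderiv hs).deriv, neg_lt_zero]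
  exact one_div_pos.2 (hpos s hs)

theorem tendsto_Fint (f : ℝ → ℝ) : Tendsto (Fint f) atTop (nhds 0) :=
  tendsto_integral_Ioi_zero tendsto_id

theorem Fint_pos (hf : ContinuousOn f (Set.Ioi s₀)) (hpos : ∀ s, s₀ < s → 0 < f s)
    (hint : ∀ s, s₀ < s → IntegrableOn (fun τ ↦ 1 / f τ) (Set.Ioi s)) (hs : s₀ < s) :
    0 < Fint f s := by
  have hanti := strictAntiOn_Fint hf hpos hint
  have hs' : s₀ < s + 1 := hs.trans (lt_add_one s)
  refine lt_of_le_of_lt (le_of_tendsto (tendsto_Fint f) ?_) (hanti hs hs' (lt_add_one s))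
  filter_upwards [eventually_ge_atTop (s + 1)] with x hx
  exact hanti.antitoneOn hs' (hs'.trans_le hx) hx

/-- The coordinate `S` in which the tail integral of `1 / f` is `exp (-η)`: near infinity, `S` is
an inverse of `-log (Fint f)` on `(s₀, ∞)`. -/
structure IsTailInverse (f : ℝ → ℝ) (s₀ : ℝ) (S : ℝ → ℝ) : Prop where
  tendsto : Tendsto S atTop atTop
  gt : ∀ᶠ η in atTop, s₀ < S η
  Fint_eq : ∀ᶠ η in atTop, Fint f (S η) = Real.exp (-η)
  hasDerivAt : ∀ᶠ η in atTop, HasDerivAt S (f (S η) * Real.exp (-η)) η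

theorem exists_isTailInverse (hf : ContinuousOn f (Set.Ioi s₀)) (hpos : ∀ s, s₀ < s → 0 < f s)
    (hint : ∀ s, s₀ < s → IntegrableOn (fun τ ↦ 1 / f τ) (Set.Ioi s)) :
    ∃ S, IsTailInverse f s₀ S := by
  have hF {s : ℝ} (hs : s₀ < s) : 0 < Fint f s := Fint_pos hf hpos hint hs
  have hderiv (s : ℝ) (hs : s₀ < s) :
      HasDerivAt (fun s ↦ -Real.log (Fint f s)) (f s * Fint f s)⁻¹ s := by
    refine ((hasDerivAt_Fint hf hpos hint hs).log (hF hs).ne').neg.congr_deriv ?_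
    rw [neg_div, neg_neg, div_div, one_div]
  have htop : Tendsto (fun s ↦ -Real.log (Fint f s)) atTop atTop := by
    refine tendsto_neg_atBot_atTop.comp (Real.tendsto_log_nhdsGT_zero.comp ?_)
    refine tendsto_nhdsWithin_iff.2 ⟨tendsto_Fint f, ?_⟩
    filter_upwards [eventually_gt_atTop s₀] with s hs using hF hs
  obtain ⟨S, hS, h⟩ := exists_tendsto_hasDerivAt_rightInverse hderiv
    (fun s hs ↦ inv_pos.2 (mul_pos (hpos s hs) (hF hs))) htop
  have hexp : ∀ᶠ η in atTop, Fint f (S η) = Real.exp (-η) := by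
    filter_upwards [h] with η hη
    rw [← Real.exp_log (hF hη.1), neg_eq_iff_eq_neg.1 hη.2.1]
  refine ⟨S, hS, h.mono fun η hη ↦ hη.1, hexp, ?_⟩
  filter_upwards [h, hexp] with η hη hFη
  simpa only [inv_inv, hFη] using hη.2.2

/-- The damping coefficient `1 - f' F` as a function of `η = -log F`. -/
noncomputable def damping (f S : ℝ → ℝ) (η : ℝ) : ℝ := 1 - deriv f (S η) * Real.exp (-η)

/-- The derivative of `damping f S`. -/
noncomputable def dampingSlope (f S : ℝ → ℝ) (η : ℝ) : ℝ := -invB2 f (Fint f) (S η) / η ^ 2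

namespace IsTailInverse

variable {S : ℝ → ℝ}

theorem hasDerivAt_mul_exp_neg (hS : IsTailInverse f s₀ S)
    (hf : DifferentiableOn ℝ f (Set.Ioi s₀)) :
    ∀ᶠ η in atTop, HasDerivAt (fun η ↦ f (S η) * Real.exp (-η))
      (-damping f S η * (f (S η) * Real.exp (-η))) η := by
  filter_upwards [hS.gt, hS.hasDerivAt] with η hη hderiv
  have hfS := (hf.differentiableAt (Ioi_mem_nhds hη)).hasDerivAt.comp η hderiv
  refine (hfS.mul (hasDerivAt_neg η).exp).congr_deriv ?_
  rw [damping, Function.comp]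
  ring

theorem eventually_invB1_eq (hS : IsTailInverse f s₀ S) :
    ∀ᶠ η in atTop, invB1 f (Fint f) (S η) = η * damping f S η := by
  filter_upwards [hS.Fint_eq] with η hη
  rw [invB1, damping, hη, Real.log_exp, neg_neg]

theorem tendsto_damping (hS : IsTailInverse f s₀ S)
    (hlim : Tendsto (fun s ↦ deriv f s * Fint f s) atTop (nhds 1)) :
    Tendsto (damping f S) atTop (nhds 0) := by
  have : Tendsto (fun η ↦ 1 - deriv f (S η) * Fint f (S η)) atTop (nhds 0) := by
    simpa only [sub_self, Function.comp_apply] using (hlim.comp hS.tendsto).const_sub 1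
  refine this.congr' ?_
  filter_upwards [hS.Fint_eq] with η hη
  rw [damping, hη]

theorem hasDerivAt_damping (hS : IsTailInverse f s₀ S) (hf : ContDiffOn ℝ 2 f (Set.Ioi s₀))
    (hf' : ∀ s, s₀ < s → deriv f s ≠ 0) :
    ∀ᶠ η in atTop, HasDerivAt (damping f S) (dampingSlope f S η) η := by
  filter_upwards [hS.gt, hS.Fint_eq, hS.hasDerivAt, eventually_gt_atTop 0] with η hgt hF hderiv hη
  have hderivf : HasDerivAt (deriv f) (deriv (deriv f) (S η)) (S η) :=
    (((hf.deriv_of_isOpen isOpen_Ioi (m := 1) le_rfl).differentiableOn one_ne_zero).differentiableAt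
      (Ioi_mem_nhds hgt)).hasDerivAt
  refine (((hderivf.comp η hderiv).mul (hasDerivAt_neg η).exp).const_sub 1).congr_deriv ?_
  have := hf' _ hgt
  rw [dampingSlope, invB2, hF, Real.log_exp, Function.comp]
  field_simp
  ring

theorem continuousAt_dampingSlope (hS : IsTailInverse f s₀ S)
    (hf : ContDiffOn ℝ 2 f (Set.Ioi s₀)) (hpos : ∀ s, s₀ < s → 0 < f s)
    (hf' : ∀ s, s₀ < s → deriv f s ≠ 0)
    (hint : ∀ s, s₀ < s → IntegrableOn (fun τ ↦ 1 / f τ) (Set.Ioi s)) :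
    ∀ᶠ η in atTop, ContinuousAt (dampingSlope f S) η := by
  filter_upwards [hS.gt, hS.hasDerivAt, eventually_gt_atTop 0] with η hgt hderiv hη
  have hS' := hderiv.continuousAt
  have hnhds := Ioi_mem_nhds hgt
  have hf₁ := hf.deriv_of_isOpen isOpen_Ioi (m := 1) le_rfl
  have cf := (hf.continuousOn.continuousAt hnhds).comp' hS'
  have cf₁ := (hf₁.continuousOn.continuousAt hnhds).comp' hS'
  have cf₂ := ((hf₁.continuousOn_deriv_of_isOpen isOpen_Ioi le_rfl).continuousAt hnhds).comp' hS'
  have cF := (hasDerivAt_Fint hf.continuousOn hpos hint hgt).continuousAt.comp' hS'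
  have hF := Fint_pos hf.continuousOn hpos hint hgt
  unfold dampingSlope invB2
  exact (((cf₁.mul cF).mul ((cF.log hF.ne').pow 2)).mul
    ((((cf.mul cf₂).mul cF).div cf₁ (hf' _ hgt)).sub continuousAt_const)).neg.div
    (continuousAt_id.pow 2) (pow_ne_zero 2 hη.ne')

theorem exists_abs_dampingSlope_le (hS : IsTailInverse f s₀ S) {b : ℝ}
    (hlim : Tendsto (invB2 f (Fint f)) atTop (nhds b)) :
    ∃ C, ∀ᶠ η in atTop, |dampingSlope f S η| ≤ C / η ^ 2 := by
  refine ⟨|b| + 1, ?_⟩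
  filter_upwards [(hlim.comp hS.tendsto).abs.eventually_le_const (lt_add_one |b|)] with η hη
  rw [dampingSlope, abs_div, abs_neg, abs_of_nonneg (sq_nonneg η)]
  exact div_le_div_of_nonneg_right hη (sq_nonneg η)

theorem exists_abs_sub_le (hS : IsTailInverse f s₀ S) (hf : DifferentiableOn ℝ f (Set.Ioi s₀))
    (hpos : ∀ s, s₀ < s → 0 < f s)
    (hlim : Tendsto (fun s ↦ deriv f s * Fint f s) atTop (nhds 1)) :
    ∃ a, ∀ x y, a < x → a < y → |y - x| ≤ 1 →
      |S y - S x| ≤ Real.exp 1 * (f (S x) * Real.exp (-x)) * |y - x| := by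
  have hdamping : ∀ᶠ η in atTop, |-damping f S η| ≤ 1 :=
    (hS.tendsto_damping hlim).neg.abs.eventually_le_const
      (by rw [neg_zero, abs_zero]; exact one_pos)
  obtain ⟨a, ha⟩ := eventually_atTop.1
    (hS.gt.and (hS.hasDerivAt.and ((hS.hasDerivAt_mul_exp_neg hf).and hdamping)))
  exact ⟨a, fun x y ↦ abs_sub_le_of_abs_logDeriv_le (fun η hη ↦ (ha η (le_of_lt hη)).2.1)
    (fun η hη ↦ (ha η (le_of_lt hη)).2.2.1)
    (fun η hη ↦ mul_pos (hpos _ (ha η (le_of_lt hη)).1) (Real.exp_pos _))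
    (fun η hη ↦ (ha η (le_of_lt hη)).2.2.2)⟩

end IsTailInverse

end TailIntegral

section ModelNonlinearity

variable {B s ρ η x x₁ t : ℝ} {φ φ' g G a : ℝ → ℝ}

theorem invB1_eq_of_logDeriv (hg : HasDerivAt g (g s * x) s) (hG : G s = Real.exp (-η)) :
    invB1 g G s = η * (1 - x * (g s * G s)) := by
  have hlog : Real.log (G s) = -η := by rw [hG, Real.log_exp]
  rw [invB1, hlog, hg.deriv]
  ring

theorem invB2_eq_of_logDeriv (hg : ∀ᶠ s in nhds s, HasDerivAt g (g s * a s) s)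
    (ha : HasDerivAt a x₁ s) (hgs : g s ≠ 0) (has : a s ≠ 0) (hG : G s = Real.exp (-η)) :
    invB2 g G s = η ^ 2 * ((a s ^ 2 + x₁) * (g s * G s) ^ 2 - a s * (g s * G s)) := by
  have hlog : Real.log (G s) = -η := by rw [hG, Real.log_exp]
  have hderiv : deriv g =ᶠ[nhds s] fun s ↦ g s * a s := hg.mono fun s hs ↦ hs.deriv
  rw [invB2, hlog, hderiv.deriv_eq, hderiv.eq_of_nhds, (hg.self_of_nhds.fun_mul ha).deriv]
  field_simp

/-- Exponents `φ`, with derivative `φ'`, for which the nonlinearity with tail integral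
`(B / 4) (φ + 1) exp (-φ)` is a model: both model nonlinearities are of this form, with
`φ s = exp s` if `B = 1` and `φ s = s ^ (B / (B - 1))` if `B > 1`. -/
structure IsModelExponent (B : ℝ) (φ φ' : ℝ → ℝ) (s : ℝ) : Prop where
  pos : 0 < φ s
  deriv_pos : 0 < φ' s
  hasDerivAt : HasDerivAt φ (φ' s) s
  hasDerivAt_deriv : HasDerivAt φ' (φ' s ^ 2 / (B * φ s)) s

theorem isModelExponent_exp (s : ℝ) : IsModelExponent 1 Real.exp Real.exp s where
  pos := Real.exp_pos s
  deriv_pos := Real.exp_pos s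
  hasDerivAt := Real.hasDerivAt_exp s
  hasDerivAt_deriv := (Real.hasDerivAt_exp s).congr_deriv (by field_simp)

theorem isModelExponent_rpow {D : ℝ} (hD : 1 < D) (hs : 0 < s) :
    IsModelExponent (D / (D - 1)) (fun s ↦ s ^ D) (fun s ↦ D * s ^ (D - 1)) s where
  pos := Real.rpow_pos_of_pos hs _
  deriv_pos := mul_pos (zero_lt_one.trans hD) (Real.rpow_pos_of_pos hs _)
  hasDerivAt := Real.hasDerivAt_rpow_const (Or.inl hs.ne')
  hasDerivAt_deriv := by
    refine ((Real.hasDerivAt_rpow_const (Or.inl hs.ne')).const_mul D).congr_deriv ?_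
    have : D - 1 ≠ 0 := sub_ne_zero.2 hD.ne'
    rw [Real.rpow_sub_one hs.ne', Real.rpow_sub_one hs.ne']
    field_simp

namespace IsModelExponent

theorem hasDerivAt_of_eventually_eq (hB : B ≠ 0) (hφ : IsModelExponent B φ φ' s)
    (hg : ∀ᶠ s in nhds s, g s = 4 * Real.exp (φ s) / (B * (φ s * φ' s))) :
    HasDerivAt g (g s * (φ' s * (1 - (1 + 1 / B) / φ s))) s := by
  have hpos := hφ.pos
  have hpos' := hφ.deriv_pos
  refine (((hφ.hasDerivAt.exp.const_mul 4).div
    ((hφ.hasDerivAt.mul hφ.hasDerivAt_deriv).const_mul B)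
    (by simp only [Pi.mul_apply]; positivity)).congr_of_eventuallyEq hg).congr_deriv ?_
  rw [hg.self_of_nhds, Pi.mul_apply]
  field_simp

theorem hasDerivAt_logDeriv (hφ : IsModelExponent B φ φ' s) :
    HasDerivAt (fun s ↦ φ' s * (1 - (1 + 1 / B) / φ s))
      (φ' s ^ 2 / (B * φ s) * (1 - (1 + 1 / B) / φ s) + φ' s * ((1 + 1 / B) * φ' s / φ s ^ 2))
      s := by
  refine (hφ.hasDerivAt_deriv.mul
    (((hasDerivAt_const s (1 + 1 / B)).div hφ.hasDerivAt hφ.pos.ne').const_sub 1)).congr_deriv ?_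
  simp only [Pi.div_apply]
  ring

theorem model_eq (hB : 1 ≤ B) (hφ : ∀ᶠ s in nhds s, IsModelExponent B φ φ' s)
    (hg : ∀ᶠ s in nhds s, g s = 4 * Real.exp (φ s) / (B * (φ s * φ' s)))
    (hG : G s = B / 4 * (φ s + 1) * Real.exp (-φ s)) (hs : 2 < φ s) :
    G s = Real.exp (-modelProfile B (φ s)) ∧
    invB1 g G s = modelProfile B (φ s) * modelDamping B (φ s) ∧
    invB2 g G s = modelProfile B (φ s) ^ 2 * ((φ s + 1) * (φ s + 2 + 2 * B) / (B * φ s ^ 4)) := by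
  have hB₀ : 0 < B := one_pos.trans_le hB
  have hpos := hφ.self_of_nhds.pos
  have hpos' := hφ.self_of_nhds.deriv_pos
  have hGexp : G s = Real.exp (-modelProfile B (φ s)) := by
    rw [hG, show -modelProfile B (φ s) = -φ s - (modelProfile B (φ s) - φ s) by ring,
      Real.exp_sub, exp_modelProfile_sub hB₀ hpos]
    field_simp
  have hgG : g s * G s = (φ s + 1) / (φ s * φ' s) := by
    rw [hG, hg.self_of_nhds, Real.exp_neg]
    field_simp
  have hderiv : ∀ᶠ s in nhds s, HasDerivAt g (g s * (φ' s * (1 - (1 + 1 / B) / φ s))) s := by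
    filter_upwards [hφ, hg.eventually_nhds] with s hφ hg
    exact hφ.hasDerivAt_of_eventually_eq hB₀.ne' hg
  have hlogDeriv : φ' s * (1 - (1 + 1 / B) / φ s) ≠ 0 := by
    have : 1 / B ≤ 1 := (div_le_one hB₀).2 hB
    refine (mul_pos hpos' (sub_pos.2 ((div_lt_one hpos).2 ?_))).ne'
    linarith
  refine ⟨hGexp, ?_, ?_⟩
  · rw [invB1_eq_of_logDeriv hderiv.self_of_nhds hGexp, hgG, modelDamping]
    field_simp
    ring
  · rw [invB2_eq_of_logDeriv hderiv hφ.self_of_nhds.hasDerivAt_logDeriv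
      (by rw [hg.self_of_nhds]; positivity) hlogDeriv hGexp, hgG]
    field_simp
    ring

end IsModelExponent

theorem div_div_sub_one {D : ℝ} (hD : 1 < D) : D / (D - 1) / (D / (D - 1) - 1) = D := by
  have : D - 1 ≠ 0 := sub_ne_zero.2 hD.ne'
  field_simp
  ring

theorem modelg_one_eq (s : ℝ) :
    modelg 1 s = 4 * Real.exp (Real.exp s) / (1 * (Real.exp s * Real.exp s)) := by
  rw [modelg, if_pos rfl, Real.exp_sub, two_mul, Real.exp_add, one_mul, mul_div_assoc]

theorem modelg_eq_rpow {D : ℝ} (hD : 1 < D) (hs : 0 < s) :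
    modelg (D / (D - 1)) s =
      4 * Real.exp (s ^ D) / (D / (D - 1) * (s ^ D * (D * s ^ (D - 1)))) := by
  have hD₁ : D - 1 ≠ 0 := sub_ne_zero.2 hD.ne'
  rw [modelg, if_neg (by rw [div_eq_one_iff_eq hD₁]; linarith), div_div_sub_one hD,
    Real.rpow_sub hs, Real.rpow_sub_one hs.ne', Real.rpow_one, mul_comm 2 D, Real.rpow_mul hs.le,
    Real.rpow_two]
  field_simp

theorem model_eq_of_log (hB : 1 ≤ B) (hρ : 2 < ρ) (ht : -2 * Real.log t = ρ) :
    modelG B (modelv B t) = Real.exp (-modelProfile B ρ) ∧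
    invB1 (modelg B) (modelG B) (modelv B t) = modelProfile B ρ * modelDamping B ρ ∧
    invB2 (modelg B) (modelG B) (modelv B t) =
      modelProfile B ρ ^ 2 * ((ρ + 1) * (ρ + 2 + 2 * B) / (B * ρ ^ 4)) := by
  rcases hB.eq_or_lt with rfl | hB1
  · have hv : Real.exp (modelv 1 t) = ρ := by
      rw [modelv, if_pos rfl, ht, Real.exp_log (by linarith)]
    rw [← hv] at hρ ⊢
    exact IsModelExponent.model_eq hB (.of_forall isModelExponent_exp) (.of_forall modelg_one_eq)
      (by rw [modelG, if_pos rfl]) hρ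
  · obtain ⟨D, hD, rfl⟩ : ∃ D, 1 < D ∧ B = D / (D - 1) :=
      ⟨B / (B - 1), (one_lt_div (by linarith)).2 (by linarith), (div_div_sub_one hB1).symm⟩
    have hρ₀ : 0 < ρ := by linarith
    have hv₀ : 0 < modelv (D / (D - 1)) t := by
      rw [modelv, if_neg hB1.ne', ht]
      exact Real.rpow_pos_of_pos hρ₀ _
    have hv : modelv (D / (D - 1)) t ^ D = ρ := by
      rw [modelv, if_neg hB1.ne', ht, ← inv_div, div_div_sub_one hD,
        Real.rpow_inv_rpow hρ₀.le (by linarith)]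
    rw [← hv] at hρ ⊢
    refine IsModelExponent.model_eq (φ := fun s ↦ s ^ D) (φ' := fun s ↦ D * s ^ (D - 1)) hB
      ((lt_mem_nhds hv₀).mono fun s hs ↦ isModelExponent_rpow hD hs)
      ((lt_mem_nhds hv₀).mono fun s hs ↦ modelg_eq_rpow hD hs) ?_ hρ
    rw [modelG, if_neg hB1.ne', div_div_sub_one hD]

end ModelNonlinearity

section RunningSup

/-- The running supremum of `R` on `(0, t]`; it is only meaningful where `R` is bounded above. -/
noncomputable def runningSup (R : ℝ → ℝ) (t : ℝ) : ℝ := sSup (R '' Set.Ioc 0 t)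

variable {R w : ℝ → ℝ} {s t δ ε : ℝ}

theorem runningSup_nonneg (hR : ∀ t, 0 ≤ R t) (t : ℝ) : 0 ≤ runningSup R t :=
  Real.sSup_nonneg (Set.forall_mem_image.2 fun s _ ↦ hR s)

theorem le_runningSup (hbdd : BddAbove (R '' Set.Ioc 0 t)) (ht : 0 < t) : R t ≤ runningSup R t :=
  le_csSup hbdd ⟨t, ⟨ht, le_rfl⟩, rfl⟩

theorem runningSup_mono (hbdd : BddAbove (R '' Set.Ioc 0 t)) (hs : 0 < s) (hst : s ≤ t) :
    runningSup R s ≤ runningSup R t :=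
  csSup_le_csSup hbdd ((Set.nonempty_Ioc.2 hs).image R)
    (Set.image_mono (Set.Ioc_subset_Ioc_right hst))

theorem eventually_forall_Ioc {p : ℝ → Prop} (hp : ∀ᶠ t in nhdsWithin 0 (Set.Ioi 0), p t) :
    ∀ᶠ t in nhdsWithin (0 : ℝ) (Set.Ioi 0), ∀ s ∈ Set.Ioc 0 t, p s := by
  obtain ⟨u, hu, h⟩ := mem_nhdsGT_iff_exists_Ioo_subset.1 hp
  filter_upwards [Ioo_mem_nhdsGT hu] with t ht s hs using h ⟨hs.1, hs.2.trans_lt ht.2⟩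

theorem eventually_forall_Ioc_le_div (hR : ∀ t, 0 ≤ R t) (hδ : 0 < δ)
    (hanti : AntitoneOn w (Set.Ioo 0 δ)) (hpos : ∀ t ∈ Set.Ioo 0 δ, 0 < w t)
    (hlim : Tendsto (fun t ↦ w t * R t) (nhdsWithin 0 (Set.Ioi 0)) (nhds 0)) (hε : 0 < ε) :
    ∀ᶠ t in nhdsWithin 0 (Set.Ioi 0), ∀ s ∈ Set.Ioc 0 t, R s ≤ ε / w t := by
  filter_upwards [eventually_forall_Ioc (hlim.eventually_le_const hε), Ioo_mem_nhdsGT hδ]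
    with t hle ht s hs
  rw [le_div_iff₀' (hpos t ht)]
  exact (mul_le_mul_of_nonneg_right (hanti ⟨hs.1, hs.2.trans_lt ht.2⟩ ht hs.2) (hR s)).trans
    (hle s hs)

theorem eventually_bddAbove_image_Ioc (hR : ∀ t, 0 ≤ R t) (hδ : 0 < δ)
    (hanti : AntitoneOn w (Set.Ioo 0 δ)) (hpos : ∀ t ∈ Set.Ioo 0 δ, 0 < w t)
    (hlim : Tendsto (fun t ↦ w t * R t) (nhdsWithin 0 (Set.Ioi 0)) (nhds 0)) :
    ∀ᶠ t in nhdsWithin 0 (Set.Ioi 0), BddAbove (R '' Set.Ioc 0 t) := by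
  filter_upwards [eventually_forall_Ioc_le_div hR hδ hanti hpos hlim one_pos] with t ht
  exact ⟨1 / w t, Set.forall_mem_image.2 ht⟩

theorem tendsto_mul_runningSup (hR : ∀ t, 0 ≤ R t) (hδ : 0 < δ)
    (hanti : AntitoneOn w (Set.Ioo 0 δ)) (hpos : ∀ t ∈ Set.Ioo 0 δ, 0 < w t)
    (hlim : Tendsto (fun t ↦ w t * R t) (nhdsWithin 0 (Set.Ioi 0)) (nhds 0)) :
    Tendsto (fun t ↦ w t * runningSup R t) (nhdsWithin 0 (Set.Ioi 0)) (nhds 0) := by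
  refine tendsto_order.2 ⟨fun b hb ↦ ?_, fun b hb ↦ ?_⟩
  · filter_upwards [Ioo_mem_nhdsGT hδ] with t ht
    exact hb.trans_le (mul_nonneg (hpos t ht).le (runningSup_nonneg hR t))
  · filter_upwards [eventually_forall_Ioc_le_div hR hδ hanti hpos hlim (half_pos hb),
      Ioo_mem_nhdsGT hδ] with t hle ht
    have hsup : runningSup R t ≤ b / 2 / w t :=
      csSup_le ((Set.nonempty_Ioc.2 ht.1).image R) (Set.forall_mem_image.2 hle)
    exact ((le_div_iff₀' (hpos t ht)).1 hsup).trans_lt (half_lt_self hb)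

theorem antitoneOn_neg_log_rpow : AntitoneOn (fun t ↦ (-Real.log t) ^ ((1 : ℝ) / 2))
    (Set.Ioo 0 1) := fun s hs t ht hst ↦
  Real.rpow_le_rpow (neg_nonneg.2 (Real.log_nonpos ht.1.le ht.2.le))
    (neg_le_neg (Real.log_le_log hs.1 hst)) (by norm_num)

theorem neg_log_rpow_pos (ht : t ∈ Set.Ioo 0 1) : 0 < (-Real.log t) ^ ((1 : ℝ) / 2) :=
  Real.rpow_pos_of_pos (neg_pos.2 (Real.log_neg ht.1 ht.2)) _

theorem tendsto_exp_neg_half :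
    Tendsto (fun ρ : ℝ ↦ Real.exp (-ρ / 2)) atTop (nhdsWithin 0 (Set.Ioi 0)) :=
  tendsto_nhdsWithin_iff.2 ⟨Real.tendsto_exp_atBot.comp
    (tendsto_neg_atTop_atBot.atBot_div_const two_pos), .of_forall fun _ ↦ Real.exp_pos _⟩

theorem tendsto_sqrt_mul_runningSup (hR : ∀ t, 0 ≤ R t)
    (hlim : Tendsto (fun t ↦ (-Real.log t) ^ ((1 : ℝ) / 2) * R t)
      (nhdsWithin 0 (Set.Ioi 0)) (nhds 0)) (c : ℝ) :
    Tendsto (fun ρ ↦ √ρ * (c * runningSup R (Real.exp (-ρ / 2)))) atTop (nhds 0) := by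
  have := ((tendsto_mul_runningSup hR one_pos antitoneOn_neg_log_rpow
    (fun _ ↦ neg_log_rpow_pos) hlim).comp tendsto_exp_neg_half).const_mul (√2 * c)
  rw [mul_zero] at this
  refine this.congr fun ρ ↦ ?_
  rw [Function.comp_apply, Real.log_exp, neg_div, neg_neg, ← Real.sqrt_eq_rpow,
    show √ρ = √2 * √(ρ / 2) by rw [← Real.sqrt_mul two_pos.le, mul_div_cancel₀ _ two_ne_zero]]
  ring

end RunningSup

section Discrepancy

variable {f ut S : ℝ → ℝ} {s₀ B : ℝ}

/-- The discrepancy `R₁ + R₂` between the nonlinearity `f` along `ut` and the model. -/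
noncomputable def discrepancy (f ut : ℝ → ℝ) (B t : ℝ) : ℝ := R1 f ut B t + R2 f ut B t

/-- The bound, in the variable `ρ = -2 log t`, for the deviation of `f` from the model. The factor
`4` comes from `1 / η ^ 2 ≤ 4 / ρ ^ 2`, where `η` is the model profile at `ρ`. -/
noncomputable def discrepancyBound (f ut : ℝ → ℝ) (B ρ : ℝ) : ℝ :=
  4 * runningSup (discrepancy f ut B) (Real.exp (-ρ / 2))

theorem R1_nonneg (f ut : ℝ → ℝ) (B t : ℝ) : 0 ≤ R1 f ut B t := abs_nonneg _

theorem R2_nonneg (f ut : ℝ → ℝ) (B t : ℝ) : 0 ≤ R2 f ut B t := abs_nonneg _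

theorem discrepancy_nonneg (t : ℝ) : 0 ≤ discrepancy f ut B t :=
  add_nonneg (R1_nonneg f ut B t) (R2_nonneg f ut B t)

theorem eventually_bddAbove_discrepancy
    (hlim : Tendsto (fun t ↦ (-Real.log t) ^ ((1 : ℝ) / 2) * discrepancy f ut B t)
      (nhdsWithin 0 (Set.Ioi 0)) (nhds 0)) :
    ∀ᶠ ρ in atTop, BddAbove (discrepancy f ut B '' Set.Ioc 0 (Real.exp (-ρ / 2))) :=
  tendsto_exp_neg_half.eventually (eventually_bddAbove_image_Ioc discrepancy_nonneg one_pos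
    antitoneOn_neg_log_rpow (fun _ ↦ neg_log_rpow_pos) hlim)

theorem eventually_discrepancy_le
    (hlim : Tendsto (fun t ↦ (-Real.log t) ^ ((1 : ℝ) / 2) * discrepancy f ut B t)
      (nhdsWithin 0 (Set.Ioi 0)) (nhds 0)) :
    ∀ᶠ ρ in atTop, 4 * discrepancy f ut B (Real.exp (-ρ / 2)) ≤ discrepancyBound f ut B ρ := by
  filter_upwards [eventually_bddAbove_discrepancy hlim] with ρ hbdd
  exact mul_le_mul_of_nonneg_left (le_runningSup hbdd (Real.exp_pos _)) four_pos.le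

theorem exists_antitoneOn_discrepancyBound
    (hlim : Tendsto (fun t ↦ (-Real.log t) ^ ((1 : ℝ) / 2) * discrepancy f ut B t)
      (nhdsWithin 0 (Set.Ioi 0)) (nhds 0)) :
    ∃ a, AntitoneOn (discrepancyBound f ut B) (Set.Ici a) := by
  obtain ⟨a, ha⟩ := eventually_atTop.1 (eventually_bddAbove_discrepancy hlim)
  refine ⟨a, fun x hx y _ hxy ↦ mul_le_mul_of_nonneg_left
    (runningSup_mono (ha x hx) (Real.exp_pos _) (Real.exp_le_exp.2 ?_)) four_pos.le⟩
  linarith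

theorem eventually_model_eq (hB : 1 ≤ B) : ∀ᶠ ρ in atTop,
    modelG B (modelv B (Real.exp (-ρ / 2))) = Real.exp (-modelProfile B ρ) ∧
    invB1 (modelg B) (modelG B) (modelv B (Real.exp (-ρ / 2))) =
      modelProfile B ρ * modelDamping B ρ ∧
    invB2 (modelg B) (modelG B) (modelv B (Real.exp (-ρ / 2))) =
      modelProfile B ρ ^ 2 * ((ρ + 1) * (ρ + 2 + 2 * B) / (B * ρ ^ 4)) := by
  filter_upwards [eventually_gt_atTop 2] with ρ hρ
  exact model_eq_of_log hB hρ (by rw [Real.log_exp]; ring)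

theorem eventually_abs_dampingSlope_add_le (hB : 1 ≤ B)
    (hut : ∀ᶠ ρ in atTop, ut (Real.exp (-ρ / 2)) = S (modelProfile B ρ)) :
    ∀ᶠ ρ in atTop, |dampingSlope f S (modelProfile B ρ) * (ρ / (ρ + 1)) +
      (ρ + 2 + 2 * B) / (B * ρ ^ 3)| ≤
      4 * discrepancy f ut B (Real.exp (-ρ / 2)) / ρ ^ 2 := by
  filter_upwards [hut, eventually_model_eq hB, eventually_half_le_modelProfile B,
    eventually_gt_atTop 0] with ρ hut hmodel hhalf hρ
  have hη : 0 < modelProfile B ρ := by linarith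
  have : 0 < B := one_pos.trans_le hB
  have heq : dampingSlope f S (modelProfile B ρ) * (ρ / (ρ + 1)) +
      (ρ + 2 + 2 * B) / (B * ρ ^ 3) = -(ρ / (ρ + 1) / modelProfile B ρ ^ 2 *
        (invB2 f (Fint f) (ut (Real.exp (-ρ / 2))) -
          invB2 (modelg B) (modelG B) (modelv B (Real.exp (-ρ / 2))))) := by
    rw [hmodel.2.2, hut, dampingSlope]
    field_simp
    ring
  have hfactor : ρ / (ρ + 1) / modelProfile B ρ ^ 2 ≤ 4 / ρ ^ 2 := by
    rw [div_div, div_le_div_iff₀ (by positivity) (by positivity)]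
    nlinarith [mul_le_mul hhalf hhalf (by positivity) hη.le, sq_nonneg ρ]
  rw [heq, abs_neg, abs_mul, abs_of_nonneg (by positivity), ← R2, mul_div_right_comm]
  exact mul_le_mul hfactor (le_add_of_nonneg_left (R1_nonneg _ _ _ _)) (R2_nonneg _ _ _ _)
    (by positivity)

namespace IsTailInverse

theorem eventually_eq (hS : IsTailInverse f s₀ S) (hanti : StrictAntiOn (Fint f) (Set.Ioi s₀))
    (hB : 1 ≤ B) (hut : ∀ᶠ t in nhdsWithin 0 (Set.Ioi 0),
      s₀ < ut t ∧ Fint f (ut t) = modelG B (modelv B t)) :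
    ∀ᶠ ρ in atTop, ut (Real.exp (-ρ / 2)) = S (modelProfile B ρ) := by
  filter_upwards [tendsto_exp_neg_half.eventually hut, eventually_model_eq hB,
    (tendsto_modelProfile B).eventually hS.gt, (tendsto_modelProfile B).eventually hS.Fint_eq]
    with ρ hut hmodel hgt hF
  exact hanti.injOn hut.1 hgt (by rw [hut.2, hmodel.1, hF])

theorem eventually_abs_damping_sub_le (hS : IsTailInverse f s₀ S) (hB : 1 ≤ B)
    (hut : ∀ᶠ ρ in atTop, ut (Real.exp (-ρ / 2)) = S (modelProfile B ρ)) :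
    ∀ᶠ ρ in atTop, |damping f S (modelProfile B ρ) - modelDamping B ρ| ≤
      4 * discrepancy f ut B (Real.exp (-ρ / 2)) / ρ := by
  filter_upwards [hut, eventually_model_eq hB, eventually_half_le_modelProfile B,
    (tendsto_modelProfile B).eventually hS.eventually_invB1_eq, eventually_gt_atTop 0]
    with ρ hut hmodel hhalf hB1 hρ
  have hη : 0 < modelProfile B ρ := by linarith
  have hR1 : R1 f ut B (Real.exp (-ρ / 2)) =
      modelProfile B ρ * |damping f S (modelProfile B ρ) - modelDamping B ρ| := by
    rw [R1, hut, hB1, hmodel.2.1, ← mul_sub, abs_mul, abs_of_pos hη]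
  rw [le_div_iff₀ hρ, discrepancy]
  nlinarith [R1_nonneg f ut B (Real.exp (-ρ / 2)), R2_nonneg f ut B (Real.exp (-ρ / 2)),
    abs_nonneg (damping f S (modelProfile B ρ) - modelDamping B ρ)]

theorem isAsymptoticToModel (hS : IsTailInverse f s₀ S) (hf : ContDiffOn ℝ 2 f (Set.Ioi s₀))
    (hpos : ∀ s, s₀ < s → 0 < f s) (hf' : ∀ s, s₀ < s → deriv f s ≠ 0)
    (hint : ∀ s, s₀ < s → IntegrableOn (fun τ ↦ 1 / f τ) (Set.Ioi s)) {b : ℝ}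
    (hlim : Tendsto (invB2 f (Fint f)) atTop (nhds b)) (hB : 1 ≤ B)
    (hut : ∀ᶠ ρ in atTop, ut (Real.exp (-ρ / 2)) = S (modelProfile B ρ))
    (hR : Tendsto (fun t ↦ (-Real.log t) ^ ((1 : ℝ) / 2) * discrepancy f ut B t)
      (nhdsWithin 0 (Set.Ioi 0)) (nhds 0)) :
    IsAsymptoticToModel B (damping f S) (dampingSlope f S) (discrepancyBound f ut B) where
  hasDerivAt := hS.hasDerivAt_damping hf hf'
  continuousAt := hS.continuousAt_dampingSlope hf hpos hf' hint
  abs_deriv_le := hS.exists_abs_dampingSlope_le hlim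
  abs_sub_le := by
    filter_upwards [hS.eventually_abs_damping_sub_le hB hut, eventually_discrepancy_le hR,
      eventually_gt_atTop 0] with ρ hle hbound hρ
    exact hle.trans (div_le_div_of_nonneg_right hbound hρ.le)
  abs_deriv_sub_le := by
    filter_upwards [eventually_abs_dampingSlope_add_le hB hut, eventually_discrepancy_le hR]
      with ρ hle hbound
    exact hle.trans (div_le_div_of_nonneg_right hbound (sq_nonneg ρ))
  antitoneOn := exists_antitoneOn_discrepancyBound hR
  tendsto := tendsto_sqrt_mul_runningSup discrepancy_nonneg hR 4

end IsTailInverse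

end Discrepancy

section RadialSolution

variable {f S V V' H H' M P' : ℝ → ℝ} {s₀ B r : ℝ}

namespace IsTailInverse

theorem eventually_hasDerivAt_comp (hS : IsTailInverse f s₀ S)
    (hf : DifferentiableOn ℝ f (Set.Ioi s₀)) (hH : Tendsto H atTop atTop)
    (hderiv : ∀ᶠ ρ in atTop, HasDerivAt H (H' ρ) ρ ∧
      HasDerivAt H' (damping f S (H ρ) * H' ρ ^ 2 - Real.exp (H ρ - ρ) / 4) ρ) :
    ∀ᶠ ρ in atTop,
      HasDerivAt (fun ρ ↦ S (H ρ)) (f (S (H ρ)) * Real.exp (-H ρ) * H' ρ) ρ ∧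
      HasDerivAt (fun ρ ↦ f (S (H ρ)) * Real.exp (-H ρ) * H' ρ)
        (-(f (S (H ρ)) * Real.exp (-ρ) / 4)) ρ := by
  filter_upwards [hderiv, hH.eventually hS.hasDerivAt,
    hH.eventually (hS.hasDerivAt_mul_exp_neg hf)] with ρ ⟨hH₁, hH₂⟩ hSderiv hrate
  refine ⟨hSderiv.comp ρ hH₁, ((hrate.comp ρ hH₁).mul hH₂).congr_deriv ?_⟩
  rw [sub_eq_neg_add (H ρ), Real.exp_add, Function.comp, Real.exp_neg (H ρ)]
  field_simp
  ring

theorem exists_logRadial_solution (hS : IsTailInverse f s₀ S)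
    (hf : DifferentiableOn ℝ f (Set.Ioi s₀)) (hpos : ∀ s, s₀ < s → 0 < f s)
    (hlim : Tendsto (fun s ↦ deriv f s * Fint f s) atTop (nhds 1)) (hB : 0 < B)
    (hP : IsAsymptoticToModel B (damping f S) P' M) :
    ∃ V V' : ℝ → ℝ, Tendsto V atTop atTop ∧ ∀ᶠ ρ in atTop,
      HasDerivAt V (V' ρ) ρ ∧ HasDerivAt V' (-(f (V ρ) * Real.exp (-ρ) / 4)) ρ ∧
      |V ρ - S (modelProfile B ρ)| ≤
        Real.exp 1 * (f (S (modelProfile B ρ)) * Real.exp (-modelProfile B ρ)) *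
          (29 * B * M ρ) := by
  obtain ⟨H, H', h⟩ := hP.exists_solution hB
  have herror : Tendsto (fun ρ ↦ 29 * B * M ρ) atTop (nhds 0) := by
    simpa only [mul_zero] using hP.tendsto_error.const_mul (29 * B)
  have hnear : ∀ᶠ ρ in atTop, |H ρ - modelProfile B ρ| ≤ 1 := by
    filter_upwards [h, herror.eventually_le_const one_pos] with ρ h hle using h.2.2.trans hle
  have hH : Tendsto H atTop atTop := by
    refine tendsto_atTop_mono' _ ?_
      (tendsto_atTop_add_const_right _ (-1) (tendsto_modelProfile B))
    filter_upwards [hnear] with ρ hρ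
    linarith [(abs_le.1 hρ).1]
  obtain ⟨a, ha⟩ := hS.exists_abs_sub_le hf hpos hlim
  refine ⟨fun ρ ↦ S (H ρ), fun ρ ↦ f (S (H ρ)) * Real.exp (-H ρ) * H' ρ,
    hS.tendsto.comp hH, ?_⟩
  filter_upwards [h, hnear, hS.eventually_hasDerivAt_comp hf hH (h.mono fun ρ h ↦ ⟨h.1, h.2.1⟩),
    hH.eventually_gt_atTop a, (tendsto_modelProfile B).eventually_gt_atTop a,
    (tendsto_modelProfile B).eventually hS.gt] with ρ h hnear hderiv hHa hηa hgt
  exact ⟨hderiv.1, hderiv.2, (ha _ _ hηa hHa hnear).trans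
    (mul_le_mul_of_nonneg_left h.2.2 (mul_nonneg (Real.exp_pos _).le
      (mul_nonneg (hpos _ hgt).le (Real.exp_pos _).le)))⟩

end IsTailInverse

theorem contDiffOn_two_of_hasDerivAt {u u' u'' : ℝ → ℝ} {s : Set ℝ} (hs : IsOpen s)
    (hu : ∀ t ∈ s, HasDerivAt u (u' t) t) (hu' : ∀ t ∈ s, HasDerivAt u' (u'' t) t)
    (hu'' : ContinuousOn u'' s) : ContDiffOn ℝ 2 u s := by
  have hu'₁ : ContDiffOn ℝ (0 + 1) u' s :=
    (contDiffOn_succ_iff_deriv_of_isOpen hs).2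
      ⟨fun t ht ↦ (hu' t ht).differentiableAt.differentiableWithinAt, by simp,
        contDiffOn_zero.2 (hu''.congr fun t ht ↦ (hu' t ht).deriv)⟩
  rw [← one_add_one_eq_two]
  exact (contDiffOn_succ_iff_deriv_of_isOpen hs).2
    ⟨fun t ht ↦ (hu t ht).differentiableAt.differentiableWithinAt, by simp,
      (hu'₁.congr fun t ht ↦ (hu t ht).deriv).of_le (by simp)⟩

theorem radial_of_logRadial
    (hf : ∀ t ∈ Set.Ioo 0 r, ContinuousAt f (V (-2 * Real.log t)))
    (hV : ∀ t ∈ Set.Ioo 0 r,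
      HasDerivAt V (V' (-2 * Real.log t)) (-2 * Real.log t))
    (hV' : ∀ t ∈ Set.Ioo 0 r, HasDerivAt V'
      (-(f (V (-2 * Real.log t)) * Real.exp (-(-2 * Real.log t)) / 4)) (-2 * Real.log t)) :
    ContDiffOn ℝ 2 (fun t ↦ V (-2 * Real.log t)) (Set.Ioo 0 r) ∧
    ∀ t ∈ Set.Ioo 0 r, deriv (deriv fun t ↦ V (-2 * Real.log t)) t +
      deriv (fun t ↦ V (-2 * Real.log t)) t / t + f (V (-2 * Real.log t)) = 0 := by
  let u := fun t ↦ V (-2 * Real.log t)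
  let u' := fun t ↦ V' (-2 * Real.log t) * (-2 / t)
  have hlog {t : ℝ} (ht : t ∈ Set.Ioo 0 r) : HasDerivAt (fun t ↦ -2 * Real.log t) (-2 / t) t :=
    ((Real.hasDerivAt_log ht.1.ne').const_mul (-2)).congr_deriv (by ring)
  have hu (t : ℝ) (ht : t ∈ Set.Ioo 0 r) : HasDerivAt u (u' t) t := (hV t ht).comp t (hlog ht)
  have hu' (t : ℝ) (ht : t ∈ Set.Ioo 0 r) : HasDerivAt u' (-(u' t / t) - f (u t)) t := by
    have hexp : Real.exp (-(-2 * Real.log t)) = t ^ 2 := by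
      rw [neg_mul, neg_neg, mul_comm, Real.exp_mul, Real.exp_log ht.1, Real.rpow_two]
    have ht₀ := ht.1.ne'
    refine (((hV' t ht).comp t (hlog ht)).mul
      ((hasDerivAt_const t (-2 : ℝ)).div (hasDerivAt_id t) ht₀)).congr_deriv ?_
    simp only [u, u', hexp, Function.comp, Pi.div_apply, id]
    field_simp
    ring
  refine ⟨contDiffOn_two_of_hasDerivAt isOpen_Ioo hu hu' fun t ht ↦ ?_, fun t ht ↦ ?_⟩
  · exact (((hu' t ht).continuousAt.div continuousAt_id ht.1.ne').neg.sub
      (ContinuousAt.comp (f := u) (hf t ht) (hu t ht).continuousAt)).continuousWithinAt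
  · have hderiv : deriv u =ᶠ[nhds t] u' := by
      filter_upwards [isOpen_Ioo.mem_nhds ht] with s hs using (hu s hs).deriv
    change deriv (deriv u) t + deriv u t / t + f (u t) = 0
    rw [hderiv.deriv_eq, hderiv.eq_of_nhds, (hu' t ht).deriv]
    ring

theorem tendsto_neg_two_mul_log :
    Tendsto (fun t ↦ -2 * Real.log t) (nhdsWithin 0 (Set.Ioi 0)) atTop :=
  Real.tendsto_log_nhdsGT_zero.const_mul_atBot_of_neg (by norm_num)

theorem exists_forall_Ioo_neg_two_mul_log {p : ℝ → Prop} (hp : ∀ᶠ ρ in atTop, p ρ) :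
    ∃ r ∈ Set.Ioo (0 : ℝ) 1, ∀ t ∈ Set.Ioo 0 r, p (-2 * Real.log t) := by
  obtain ⟨r, hr, h⟩ := (mem_nhdsGT_iff_exists_mem_Ioc_Ioo_subset one_half_pos).1
    (tendsto_neg_two_mul_log.eventually hp)
  exact ⟨r, ⟨hr.1, hr.2.trans_lt one_half_lt_one⟩, fun t ht ↦ h ht⟩

theorem exp_neg_neg_two_mul_log_div_two {t : ℝ} (ht : 0 < t) :
    Real.exp (-(-2 * Real.log t) / 2) = t := by
  rw [neg_mul, neg_neg, mul_div_cancel_left₀ _ two_ne_zero, Real.exp_log ht]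

end RadialSolution

/-- Theorem 1.2: under (f1), (f2) and assumption (1.1a), the radial equation
`u'' + u'/t + f(u) = 0` has a singular solution near the origin which is
approximated by `ũ` up to `O(f(ũ)F(ũ) sup (R₁+R₂))`. -/
theorem stmt3 (f ut : ℝ → ℝ) (s₀ B t₁ : ℝ) (hs₀ : 0 < s₀)
    (hf : ContDiffOn ℝ 2 f (Set.Ioi s₀))
    (hfpos : ∀ s, s₀ < s → 0 < f s)
    (hf' : ∀ s, s₀ < s → 0 < deriv f s)
    (hfint : ∀ s, s₀ < s → IntegrableOn (fun τ => 1 / f τ) (Set.Ioi s))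
    (hB : 1 ≤ B)
    (hf2a : Tendsto (fun s => deriv f s * Fint f s) atTop (nhds 1))
    (hf2b : Tendsto (fun s => invB2 f (Fint f) s) atTop (nhds (1 / B)))
    (ht₁ : t₁ ∈ Set.Ioo (0 : ℝ) 1)
    (hut : ∀ t ∈ Set.Ioo (0 : ℝ) t₁, s₀ < ut t ∧ Fint f (ut t) = modelG B (modelv B t))
    (h11a : Tendsto (fun t => (-Real.log t) ^ ((1 : ℝ) / 2) * (R1 f ut B t + R2 f ut B t))
      (nhdsWithin 0 (Set.Ioi 0)) (nhds 0)) :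
    ∃ r₀ ∈ Set.Ioo (0 : ℝ) 1, ∃ C > (0 : ℝ), ∃ u : ℝ → ℝ,
      ContDiffOn ℝ 2 u (Set.Ioo 0 r₀) ∧
      (∀ t ∈ Set.Ioo (0 : ℝ) r₀, deriv (deriv u) t + deriv u t / t + f (u t) = 0) ∧
      Tendsto u (nhdsWithin 0 (Set.Ioi 0)) atTop ∧
      ∀ t ∈ Set.Ioo (0 : ℝ) r₀,
        |u t - ut t| ≤ C * f (ut t) * Fint f (ut t) *
          sSup ((fun s => R1 f ut B s + R2 f ut B s) '' Set.Ioc 0 t) := by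
  obtain ⟨S, hS⟩ := exists_isTailInverse hf.continuousOn hfpos hfint
  have hutS := hS.eventually_eq (strictAntiOn_Fint hf.continuousOn hfpos hfint) hB
    (mem_of_superset (Ioo_mem_nhdsGT ht₁.1) hut)
  have hP := hS.isAsymptoticToModel hf hfpos (fun s hs ↦ (hf' s hs).ne') hfint hf2b hB hutS h11a
  obtain ⟨V, V', hV, h⟩ := hS.exists_logRadial_solution (hf.differentiableOn two_ne_zero) hfpos
    hf2a (one_pos.trans_le hB) hP
  have hfV : ∀ᶠ ρ in atTop, ContinuousAt f (V ρ) := (hV.eventually_gt_atTop s₀).mono fun ρ hρ ↦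
    hf.continuousOn.continuousAt (Ioi_mem_nhds hρ)
  obtain ⟨r₀, hr₀, hr⟩ := exists_forall_Ioo_neg_two_mul_log (hfV.and (h.and (hutS.and
    ((tendsto_modelProfile B).eventually hS.Fint_eq))))
  obtain ⟨hu, hode⟩ := radial_of_logRadial (fun t ht ↦ (hr t ht).1)
    (fun t ht ↦ (hr t ht).2.1.1) (fun t ht ↦ (hr t ht).2.1.2.1)
  refine ⟨r₀, hr₀, 116 * Real.exp 1 * B, by positivity, fun t ↦ V (-2 * Real.log t), hu, hode,
    hV.comp tendsto_neg_two_mul_log, fun t ht ↦ ?_⟩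
  obtain ⟨-, ⟨-, -, hbound⟩, hutt, hF⟩ := hr t ht
  rw [exp_neg_neg_two_mul_log_div_two ht.1] at hutt
  rw [discrepancyBound, exp_neg_neg_two_mul_log_div_two ht.1] at hbound
  rw [hutt, hF]
  refine hbound.trans_eq ?_
  rw [runningSup, show (fun s ↦ R1 f ut B s + R2 f ut B s) = discrepancy f ut B from rfl]
  ring
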